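/- arXiv:1409.3473 — 3 statements merged into one kernel-verified Lean document; each statement's English description precedes it below -/
import Mathlib

section
/- (Glassbrenner's criterion) Let (S, 𝔫) be an F-finite regular local ring of prime characteristic p, let I ⊆ S be a radical ideal, set R = S/I, and let c ∈ S \ I be an element such that the localization R_{c̄} of R at the image c̄ of c is strongly F-regular. Then R is strongly F-regular if and only if there exists e ∈ ℕ such that c·(I^{[p^e]} : I) is not contained in 𝔫^{[p^e]}. -/
open IsLocalRing Filter Topology
open scoped TensorProduct

/-- The Frobenius bracket power `I^{[q]}`: the ideal generated by `q`-th powers of elements of `I`. -/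
def Ideal.bracketPow {R : Type*} [CommRing R] (I : Ideal R) (q : ℕ) : Ideal R :=
  Ideal.span ((fun a => a ^ q) '' (I : Set R))

/-- `R°`: the set of elements of `R` not contained in any minimal prime ideal. -/
def ringCirc (R : Type*) [CommRing R] : Set R :=
  {c | ∀ P ∈ minimalPrimes R, c ∉ P}

/-- The tight closure of an ideal `I` in a ring of characteristic `p`:
`x ∈ I^*` iff there is `c ∈ R°` with `c * x ^ (p ^ e) ∈ I^{[p^e]}` for all sufficiently
large `e`. -/
def tightClosure {R : Type*} [CommRing R] (p : ℕ) (I : Ideal R) : Set R :=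
  {x | ∃ c ∈ ringCirc R, ∃ N : ℕ, ∀ e : ℕ, N ≤ e → c * x ^ p ^ e ∈ I.bracketPow (p ^ e)}

/-- `x` is integral over the ideal `J`: there are `n ≥ 1` and `aᵢ ∈ Jⁱ` with
`x ^ n + a₁ x ^ (n-1) + ⋯ + aₙ = 0`. -/
def IsIntegralOverIdeal {R : Type*} [CommRing R] (J : Ideal R) (x : R) : Prop :=
  ∃ n : ℕ, 0 < n ∧ ∃ a : ℕ → R, (∀ i ∈ Finset.Icc 1 n, a i ∈ J ^ i) ∧
    x ^ n + ∑ i ∈ Finset.Icc 1 n, a i * x ^ (n - i) = 0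

/-- `R` is F-finite: `F_*R` is a finitely generated `R`-module, i.e. there is a finite set
of generators `s` such that every element of `R` is an `R`-linear combination of elements of
`s` with respect to the Frobenius-twisted action `r • b = r ^ p * b`. -/
def FFinite (R : Type*) [CommRing R] (p : ℕ) : Prop :=
  ∃ s : Finset R, ∀ x : R, ∃ a : R → R, x = ∑ b ∈ s, a b ^ p * b

/-- The map `cF^e : R → F^e_* R`, `x ↦ c * x ^ (p ^ e)`, splits as an `R`-module
homomorphism: there is an additive `φ : R → R` with `φ (r ^ (p ^ e) * x) = r * φ x`
for all `r, x` and `φ c = 1`. -/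
def FrobSplitsWith {R : Type*} [CommRing R] (p : ℕ) (c : R) (e : ℕ) : Prop :=
  ∃ φ : R →+ R, (∀ r x : R, φ (r ^ p ^ e * x) = r * φ x) ∧ φ c = 1

/-- `R` is strongly F-regular: F-finite, reduced, and for every `c ∈ R°` some `cF^e` splits. -/
def StronglyFRegular (R : Type*) [CommRing R] (p : ℕ) : Prop :=
  FFinite R p ∧ IsReduced R ∧ ∀ c ∈ ringCirc R, ∃ e : ℕ, FrobSplitsWith p c e

/-- `R` is F-pure: the Frobenius map `R → F_* R` splits as an `R`-module homomorphism. -/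
def FPure (R : Type*) [CommRing R] (p : ℕ) : Prop :=
  ∃ φ : R →+ R, (∀ r x : R, φ (r ^ p * x) = r * φ x) ∧ φ 1 = 1

/-- A regular local ring: a Noetherian local ring whose maximal ideal can be generated by
`dim R` elements. -/
def IsRegularLocal (R : Type*) [CommRing R] [IsLocalRing R] : Prop :=
  IsNoetherianRing R ∧ ∃ (d : ℕ) (x : Fin d → R),
    ringKrullDim R = d ∧ IsLocalRing.maximalIdeal R = Ideal.span (Set.range x)

/-- The height of an ideal: the infimum of the heights of the primes containing it. -/
noncomputable def idealHeight {R : Type*} [CommRing R] (I : Ideal R) : ℕ∞ :=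
  ⨅ (P : PrimeSpectrum R) (_ : I ≤ P.asIdeal), Order.height P

/-- A parameter ideal: an ideal generated by `ht I` elements. -/
def IsParameterIdeal {R : Type*} [CommRing R] (I : Ideal R) : Prop :=
  ∃ n : ℕ, idealHeight I = n ∧ ∃ x : Fin n → R, I = Ideal.span (Set.range x)

/-- A local ring is F-rational if every parameter ideal is tightly closed. -/
def FRationalLocal (R : Type*) [CommRing R] [IsLocalRing R] (p : ℕ) : Prop :=
  ∀ I : Ideal R, IsParameterIdeal I → tightClosure p I = ↑I

/-- A Cohen–Macaulay local ring: every full system of parameters `x₁, …, x_d`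
(`d = dim B`) is a regular sequence, i.e. `(x₁, …, xᵢ) : xᵢ₊₁ = (x₁, …, xᵢ)`. -/
def IsCohenMacaulayLocalRing (B : Type*) [CommRing B] [IsLocalRing B] : Prop :=
  ∀ d : ℕ, ringKrullDim B = d →
    ∀ x : Fin d → B, (∀ i, x i ∈ IsLocalRing.maximalIdeal B) →
      (Ideal.span (Set.range x)).radical = IsLocalRing.maximalIdeal B →
      ∀ i : Fin d,
        Submodule.colon (Ideal.span (x '' {j | (j : ℕ) < (i : ℕ)})) (Ideal.span {x i}) =
          Ideal.span (x '' {j | (j : ℕ) < (i : ℕ)})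

/-- The length `ℓ_R M` of a module, as an extended natural number: the supremum of the
lengths of chains of submodules below `⊤`. -/
noncomputable def moduleLength (R M : Type*) [Ring R] [AddCommGroup M] [Module R M] : ℕ∞ :=
  Order.height (⊤ : Submodule R M)

/-- The Frobenius endomorphism `x ↦ x ^ p`, as a ring homomorphism, in prime
characteristic `p`. -/
noncomputable def frobeniusRingHom (R : Type*) [CommRing R] (p : ℕ) [Fact p.Prime] [CharP R p] :
    R →+* R :=
  frobenius R p

/-!
For a regular local ring `S` the Frobenius `S → F^e_* S` is a Frobenius extension: `F^e_* S` is
finite free and `Hom_S(F^e_* S, S)` is cyclic over `F^e_* S`. This goes by induction on `dim S`: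
for a parameter `y` outside `𝔫 ^ 2`, the extension factors through the monogenic extension
`S[y^{1/q}]`, over which `F^e_* S` is, modulo `y^{1/q}`, the Frobenius of `S/(y)`.

With `Φ` generating the dual, a functional `Φ (g * ·)` descends to `S/I` exactly when
`g ∈ (I^{[q]} : I)`, and takes a unit value at `c` for some multiple of `g` exactly when
`c * g ∉ 𝔫^{[q]}`. So the colon condition says that `c F^e` splits on `R = S/I`.

If `c F^e` splits, so do maps `c ^ n F^{e'}` for every `n`, and a splitting of `d F^{e'}` over `R_c`
becomes, after clearing denominators, an `R`-linear map sending `d` to a power of `c`. Conversely a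
strongly F-regular local ring is a domain, so `c` itself lies in `R°`.
-/

/-- The Frobenius pushforward `F^e_* R`: a copy of the ring `R`, made into an `R`-algebra by the
`e`-th iterate of the Frobenius endomorphism. -/
def FrobeniusPushforward (R : Type*) (_p _e : ℕ) : Type _ := R

namespace FrobeniusPushforward

section Basic

variable (R : Type*) [CommRing R] (p e : ℕ)

noncomputable instance : CommRing (FrobeniusPushforward R p e) := inferInstanceAs (CommRing R)

/-- The identity of `R`, as a ring isomorphism onto the Frobenius pushforward. -/
def of : R ≃+* FrobeniusPushforward R p e := RingEquiv.refl R

variable [ExpChar R p]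

noncomputable instance : Algebra R (FrobeniusPushforward R p e) :=
  ((of R p e : R →+* FrobeniusPushforward R p e).comp (iterateFrobenius R p e)).toAlgebra

theorem smul_of (r x : R) : r • of R p e x = of R p e (r ^ p ^ e * x) :=
  rfl

end Basic

variable {R R' : Type*} [CommRing R] [CommRing R'] {p e : ℕ}

variable (p e) in
/-- The ring homomorphism `F^e_* f : F^e_* R → F^e_* R'` induced by `f : R → R'`. -/
noncomputable def map (f : R →+* R') : FrobeniusPushforward R p e →+* FrobeniusPushforward R' p e :=
  ((of R' p e : R' →+* FrobeniusPushforward R' p e).comp f).comp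
    ((of R p e).symm : FrobeniusPushforward R p e →+* R)

theorem map_of (f : R →+* R') (x : R) : map p e f (of R p e x) = of R' p e (f x) :=
  rfl

theorem map_surjective {f : R →+* R'} (hf : Function.Surjective f) :
    Function.Surjective (map p e f) :=
  hf

theorem map_algebraMap [ExpChar R p] [ExpChar R' p] (f : R →+* R') (r : R) :
    map p e f (algebraMap R _ r) = algebraMap R' _ (f r) :=
  f.map_pow r _

end FrobeniusPushforward

open Module FrobeniusPushforward

section FFinite

variable {R : Type*} [CommRing R] {p e : ℕ} [ExpChar R p]

theorem FrobeniusPushforward.finite_iff :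
    Module.Finite R (FrobeniusPushforward R p e) ↔ (iterateFrobenius R p e).Finite :=
  Iff.rfl

theorem fFinite_iff_frobenius_finite : FFinite R p ↔ (frobenius R p).Finite := by
  have smul_of_one (r x : R) : r • of R p 1 x = of R p 1 (r ^ p * x) := by rw [smul_of, pow_one]
  rw [← iterateFrobenius_one, ← finite_iff, Module.finite_def, Submodule.fg_def]
  classical
  constructor
  · rintro ⟨s, hs⟩
    refine ⟨of R p 1 '' s, s.finite_toSet.image _, eq_top_iff.2 fun x _ ↦ ?_⟩
    obtain ⟨a, ha⟩ := hs ((of R p 1).symm x)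
    rw [← (of R p 1).apply_symm_apply x, ha, map_sum]
    refine Submodule.sum_mem _ fun b hb ↦ ?_
    rw [← smul_of_one]
    exact Submodule.smul_mem _ _ (Submodule.subset_span ⟨b, hb, rfl⟩)
  · rintro ⟨t, ht, hspan⟩
    refine ⟨ht.toFinset.image (of R p 1).symm, fun x ↦ ?_⟩
    have hx : of R p 1 x ∈ Submodule.span R (ht.toFinset : Set (FrobeniusPushforward R p 1)) := by
      rw [ht.coe_toFinset, hspan]
      trivial
    obtain ⟨a, -, ha⟩ := Submodule.mem_span_finset.1 hx
    refine ⟨a ∘ of R p 1, (of R p 1).injective ?_⟩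
    rw [← ha, Finset.sum_image (of R p 1).symm.injective.injOn, map_sum]
    refine Finset.sum_congr rfl fun b _ ↦ ?_
    rw [Function.comp_apply, RingEquiv.apply_symm_apply, ← smul_of_one,
      RingEquiv.apply_symm_apply]

theorem iterateFrobenius_finite (h : (frobenius R p).Finite) (e : ℕ) :
    (iterateFrobenius R p e).Finite := by
  induction e with
  | zero =>
    rw [iterateFrobenius_zero]
    exact .id R
  | succ e ih =>
    rw [iterateFrobenius_add, iterateFrobenius_one]
    exact ih.comp h

theorem frobenius_finite_of_surjective {R' : Type*} [CommRing R'] [ExpChar R' p]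
    (h : (frobenius R p).Finite) (f : R →+* R') (hf : Function.Surjective f) :
    (frobenius R' p).Finite := by
  apply RingHom.Finite.of_comp_finite (f := f)
  rw [← f.frobenius_comm]
  exact (RingHom.Finite.of_surjective f hf).comp h

theorem frobSplitsWith_iff {c : R} : FrobSplitsWith p c e ↔
    ∃ φ : FrobeniusPushforward R p e →ₗ[R] R, φ (of R p e c) = 1 := by
  constructor
  · rintro ⟨φ, hφ, hc⟩
    exact ⟨{ φ.comp (of R p e).symm.toAddMonoidHom with
      map_smul' := fun r x ↦ hφ r ((of R p e).symm x) }, hc⟩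
  · rintro ⟨φ, hc⟩
    exact ⟨φ.toAddMonoidHom.comp (of R p e).toAddMonoidHom,
      fun r x ↦ φ.map_smul r (of R p e x), hc⟩

end FFinite

section SemilinearDual

variable {A A' M M' : Type*} [CommRing A] [CommRing A'] {π : A →+* A'}
  [AddCommGroup M] [Module A M] [AddCommGroup M'] [Module A' M']

theorem exists_dual_lift [Projective A M] (hπ : Function.Surjective π) (f : M →ₛₗ[π] M')
    (ψ : Dual A' M') : ∃ φ : Dual A M, ∀ m, π (φ m) = ψ (f m) := by
  algebraize [π]
  let ψf : M →ₗ[A] A' :=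
    { toFun := fun m ↦ ψ (f m)
      map_add' := by simp
      map_smul' := fun a m ↦ by simp [Algebra.smul_def, RingHom.algebraMap_toAlgebra] }
  obtain ⟨φ, hφ⟩ := projective_lifting_property (Algebra.linearMap A A') ψf hπ
  exact ⟨φ, fun m ↦ LinearMap.congr_fun hφ m⟩

theorem exists_dual_descent (hπ : Function.Surjective π) {f : M →ₛₗ[π] M'}
    (hf : Function.Surjective f) (φ : Dual A M) (hφ : ∀ m, f m = 0 → π (φ m) = 0) :
    ∃ ψ : Dual A' M', ∀ m, ψ (f m) = π (φ m) := by
  have well_defined {m n : M} (h : f m = f n) : π (φ m) = π (φ n) := by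
    rw [← sub_eq_zero, ← map_sub, ← map_sub]
    exact hφ _ (by rw [map_sub, h, sub_self])
  have section_spec := Function.surjInv_eq hf
  refine ⟨{
      toFun := fun m' ↦ π (φ (Function.surjInv hf m'))
      map_add' := fun m n ↦ ?_
      map_smul' := fun a' m ↦ ?_ }, fun m ↦ well_defined (section_spec _)⟩
  · rw [← map_add, ← map_add]
    exact well_defined (by simp only [map_add, section_spec])
  · obtain ⟨a, rfl⟩ := hπ a'
    rw [RingHom.id_apply, smul_eq_mul, ← map_mul, ← smul_eq_mul, ← map_smul]
    exact well_defined (by simp only [map_smulₛₗ, section_spec])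

end SemilinearDual

section DualGenerator

variable {A B C : Type*} [CommRing A] [CommRing B] [CommRing C] [Algebra A B]

/-- A generator of the dual `Hom_A(B, A)` as a `B`-module: every functional is `b ↦ Φ (g * b)` for
some `g`. -/
def IsDualGenerator (Φ : Dual A B) : Prop :=
  ∀ φ : Dual A B, ∃ g : B, ∀ b, φ b = Φ (g * b)

theorem IsDualGenerator.eq_zero_of_forall_mul [Projective A B] {Φ : Dual A B}
    (hΦ : IsDualGenerator Φ) {b : B} (hb : ∀ g, Φ (g * b) = 0) : b = 0 := by
  refine (forall_dual_apply_eq_zero_iff A b).1 fun φ ↦ ?_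
  obtain ⟨g, hg⟩ := hΦ φ
  rw [hg, hb]

variable (A B) in
/-- A Frobenius extension of commutative rings: `B` is finite free over `A` and the `B`-module
`Hom_A(B, A)` is cyclic (hence free of rank one). -/
structure IsFrobeniusExtension : Prop where
  finite : Module.Finite A B
  free : Free A B
  exists_generator : ∃ Φ : Dual A B, IsDualGenerator Φ

variable [Algebra A C] [Algebra C B] [IsScalarTower A C B]

theorem IsDualGenerator.comp [Projective A C] {Φ : Dual A C} {Ψ : Dual C B}
    (hΦ : IsDualGenerator Φ) (hΨ : IsDualGenerator Ψ) :
    IsDualGenerator (Φ ∘ₗ Ψ.restrictScalars A) := by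
  intro φ
  choose ψ hψ using fun b ↦ hΦ (φ ∘ₗ (LinearMap.toSpanSingleton C B b).restrictScalars A)
  replace hψ (b : B) (c : C) : φ (c • b) = Φ (ψ b * c) := hψ b c
  have ext_of_forall {u v : C} (h : ∀ c, Φ (u * c) = Φ (v * c)) : u = v :=
    sub_eq_zero.1 <| hΦ.eq_zero_of_forall_mul fun c ↦ by
      rw [mul_comm, sub_mul, map_sub, h, sub_self]
  let ψ' : Dual C B :=
    { toFun := ψ
      map_add' := fun b b' ↦ ext_of_forall fun c ↦ by
        rw [add_mul, map_add, ← hψ, ← hψ, ← hψ, smul_add, map_add]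
      map_smul' := fun c b ↦ ext_of_forall fun c' ↦ by
        rw [RingHom.id_apply, smul_eq_mul, show c * ψ b * c' = ψ b * (c' * c) by ring, ← hψ,
          ← hψ, mul_smul] }
  obtain ⟨g, hg⟩ := hΨ ψ'
  refine ⟨g, fun b ↦ ?_⟩
  rw [LinearMap.comp_apply, LinearMap.restrictScalars_apply, ← hg, ← one_smul C b, hψ, mul_one,
    one_smul]
  rfl

theorem IsFrobeniusExtension.trans (hAC : IsFrobeniusExtension A C)
    (hCB : IsFrobeniusExtension C B) : IsFrobeniusExtension A B := by
  obtain ⟨_, _, Φ, hΦ⟩ := hAC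
  obtain ⟨_, _, Ψ, hΨ⟩ := hCB
  exact ⟨.trans C B, .trans (S := C), _, hΦ.comp hΨ⟩

theorem isFrobeniusExtension_of_isField (hA : IsField A) (hB : IsField B) [Module.Finite A B] :
    IsFrobeniusExtension A B := by
  let := hA.toField
  obtain ⟨Φ, hΦ⟩ : ∃ Φ : Dual A B, Φ 1 ≠ 0 := by
    have := hB.nontrivial
    exact Projective.exists_dual_ne_zero A one_ne_zero
  let mulForm : B →ₗ[A] Dual A B := (LinearMap.mul A B).compr₂ Φ
  have mulForm_injective : Function.Injective mulForm := by
    refine (injective_iff_map_eq_zero _).2 fun g hg ↦ ?_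
    by_contra hg0
    obtain ⟨g', hg'⟩ := hB.mul_inv_cancel hg0
    exact hΦ (hg' ▸ LinearMap.congr_fun hg g')
  have mulForm_surjective : Function.Surjective mulForm :=
    (LinearMap.injective_iff_surjective_of_finrank_eq_finrank
      (Subspace.dual_finrank_eq (K := A) (V := B)).symm).1 mulForm_injective
  refine ⟨inferInstance, inferInstance, Φ, fun φ ↦ ?_⟩
  obtain ⟨g, rfl⟩ := mulForm_surjective φ
  exact ⟨g, fun _ ↦ rfl⟩

end DualGenerator

section Monogenic

variable {A C : Type*} [CommRing A] [CommRing C] [Algebra A C]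

/- For `n = pb.dim` and `Φ` the coefficient of `gen ^ (n - 1)`, the functional `Φ (gen ^ k * ·)` is
the coordinate `n - 1 - k` plus a combination of later coordinates. -/
theorem isFrobeniusExtension_of_powerBasis (pb : PowerBasis A C) : IsFrobeniusExtension A C := by
  let Φ : Dual A C := pb.basis.constr A fun i ↦ if i + 1 = pb.dim then 1 else 0
  have Φ_gen_pow {k : ℕ} (hk : k < pb.dim) : Φ (pb.gen ^ k) = if k + 1 = pb.dim then 1 else 0 := by
    rw [← pb.basis_eq_pow ⟨k, hk⟩]
    exact pb.basis.constr_basis A _ _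
  let multiples : Submodule A (Dual A C) := LinearMap.range ((LinearMap.mul A C).compr₂ Φ)
  have coord_mem (k : ℕ) : ∀ i : Fin pb.dim, i + k + 1 = pb.dim → pb.basis.coord i ∈ multiples := by
    induction k using Nat.strong_induction_on with
    | h k ih =>
      intro i hi
      let Φk : Dual A C := (LinearMap.mul A C).compr₂ Φ (pb.gen ^ k)
      have Φk_apply (j : Fin pb.dim) : Φk (pb.basis j) = Φ (pb.gen ^ (k + j : ℕ)) := by
        rw [pb.basis_eq_pow, pow_add]
        rfl
      have Φk_self : Φk (pb.basis i) = 1 := by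
        rw [Φk_apply, Φ_gen_pow (by lia), if_pos (by lia)]
      have Φk_eq : pb.basis.coord i + ∑ j ∈ Finset.univ.erase i,
          Φk (pb.basis j) • pb.basis.coord j = Φk := by
        conv_rhs => rw [← pb.basis.sum_dual_apply_smul_coord Φk]
        rw [← Finset.add_sum_erase _ _ (Finset.mem_univ i), Φk_self, one_smul]
      rw [eq_sub_of_add_eq Φk_eq]
      refine sub_mem ⟨_, rfl⟩ (Submodule.sum_mem _ fun j hj ↦ ?_)
      rcases lt_or_gt_of_ne (Finset.ne_of_mem_erase hj) with hji | hij
      · rw [Φk_apply, Φ_gen_pow (by lia), if_neg (by lia), zero_smul]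
        exact zero_mem _
      · exact Submodule.smul_mem _ _ (ih (pb.dim - 1 - j) (by lia) j (by lia))
  refine ⟨pb.finite, .of_basis pb.basis, Φ, fun φ ↦ ?_⟩
  obtain ⟨g, rfl⟩ : φ ∈ multiples := by
    rw [← pb.basis.sum_dual_apply_smul_coord φ]
    exact Submodule.sum_mem _ fun i _ ↦
      Submodule.smul_mem _ _ (coord_mem (pb.dim - 1 - i) i (by lia))
  exact ⟨g, fun _ ↦ rfl⟩

end Monogenic

section FreeDual

variable {A M : Type*} [CommRing A] [AddCommGroup M] [Module A M] [Module.Finite A M] [Free A M]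

theorem dual_mem_smul_top {I : Ideal A} {φ : Dual A M} (hφ : ∀ m, φ m ∈ I) :
    φ ∈ I • (⊤ : Submodule A (Dual A M)) := by
  rw [← (Free.chooseBasis A M).sum_dual_apply_smul_coord φ]
  exact Submodule.sum_mem _ fun i _ ↦ Submodule.smul_mem_smul (hφ _) Submodule.mem_top

theorem mem_smul_top_iff_forall_dual {I : Ideal A} {m : M} :
    m ∈ I • (⊤ : Submodule A M) ↔ ∀ φ : Dual A M, φ m ∈ I := by
  refine ⟨fun hm φ ↦ ?_, fun h ↦ ?_⟩
  · have : φ m ∈ (I • ⊤ : Submodule A M).map φ := Submodule.mem_map_of_mem hm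
    rw [Submodule.map_smul''] at this
    exact Ideal.mul_le_left this
  · rw [← (Free.chooseBasis A M).sum_repr m]
    exact Submodule.sum_mem _ fun i _ ↦
      Submodule.smul_mem_smul (h ((Free.chooseBasis A M).coord i)) Submodule.mem_top

end FreeDual

open Pointwise in
theorem free_of_quotient {A A' M M' : Type*} [CommRing A] [CommRing A'] {πA : A →+* A'}
    [AddCommGroup M] [Module A M] [AddCommGroup M'] [Module A' M'] {π : M →ₛₗ[πA] M'}
    [FinitePresentation A M] [Free A' M'] {x : A} (hx : x ∈ (⊥ : Ideal A).jacobson)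
    (hxM : IsSMulRegular M x) (hπA : Function.Surjective πA) (hπ : Function.Surjective π)
    (hkerA : RingHom.ker πA = Ideal.span {x})
    (hker : LinearMap.ker π = x • (⊤ : Submodule A M)) : Free A M := by
  rw [← free_quotSMulTop_iff_free A M hx hxM]
  let eA : A ⧸ Ideal.span {x} ≃+* A' :=
    (Ideal.quotEquivOfEq hkerA.symm).trans (RingHom.quotientKerEquivOfSurjective hπA)
  let f := Submodule.liftQ (x • (⊤ : Submodule A M)) π hker.ge
  let f' : QuotSMulTop x M →ₛₗ[(eA : A ⧸ Ideal.span {x} →+* A')] M' :=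
    { f with
      map_smul' := fun a m ↦ by
        obtain ⟨a, rfl⟩ := Ideal.Quotient.mk_surjective a
        exact f.map_smulₛₗ a m }
  have f_bijective : Function.Bijective f' :=
    ⟨(LinearMap.ker_eq_bot (f := f)).1 (Submodule.ker_liftQ_eq_bot' _ π hker.symm),
      .of_comp (g := Submodule.mkQ _) hπ⟩
  have := RingHomInvPair.of_ringEquiv eA
  have := RingHomInvPair.of_ringEquiv_symm eA
  exact Free.of_equiv (LinearEquiv.ofBijective f' f_bijective).symm

section Deformation

variable {A A' B B' : Type*} [CommRing A] [CommRing A'] [CommRing B] [CommRing B'] [Algebra A B]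
  [Algebra A' B'] {πA : A →+* A'} {πB : B →+* B'}

theorem IsDualGenerator.of_quotient [Module.Finite A B] [Free A B]
    (hπA : Function.Surjective πA) (hπB : Function.Surjective πB)
    (hπ : ∀ a, πB (algebraMap A B a) = algebraMap A' B' (πA a))
    {I : Ideal A} (hI : I ≤ (⊥ : Ideal A).jacobson) (hkerA : RingHom.ker πA = I)
    (hkerB : RingHom.ker πB = I.map (algebraMap A B)) {Φ : Dual A B} {Ψ : Dual A' B'}
    (hΦ : ∀ b, πA (Φ b) = Ψ (πB b)) (hΨ : IsDualGenerator Ψ) : IsDualGenerator Φ := by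
  let π : B →ₛₗ[πA] B' :=
    { πB with map_smul' := fun a b ↦ by simp [Algebra.smul_def, hπ] }
  let multiples : Submodule A (Dual A B) := LinearMap.range ((LinearMap.mul A B).compr₂ Φ)
  suffices multiples = ⊤ by
    intro φ
    obtain ⟨g, rfl⟩ : φ ∈ multiples := this ▸ Submodule.mem_top
    exact ⟨g, fun _ ↦ rfl⟩
  refine top_le_iff.1 (Submodule.le_of_le_smul_of_le_jacobson_bot Module.Finite.fg_top hI ?_)
  intro φ _
  obtain ⟨ψ, hψ⟩ := exists_dual_descent (f := π) hπA hπB φ fun b hb ↦ by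
    rw [← RingHom.mem_ker, hkerA]
    refine mem_smul_top_iff_forall_dual.1 ?_ φ
    rwa [Ideal.smul_top_eq_map, Submodule.restrictScalars_mem, ← hkerB]
  obtain ⟨g', hg'⟩ := hΨ ψ
  obtain ⟨g, rfl⟩ := hπB g'
  let Φg : Dual A B := (LinearMap.mul A B).compr₂ Φ g
  have sub_mem_smul : φ - Φg ∈ I • (⊤ : Submodule A (Dual A B)) := by
    refine dual_mem_smul_top fun b ↦ ?_
    rw [← hkerA, RingHom.mem_ker, LinearMap.sub_apply, map_sub, ← hψ, sub_eq_zero, hg']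
    exact (congrArg Ψ (map_mul πB g b)).symm.trans (hΦ _).symm
  rw [← add_sub_cancel Φg φ]
  exact Submodule.add_mem_sup ⟨g, rfl⟩ sub_mem_smul

theorem IsFrobeniusExtension.of_quotient [IsNoetherianRing A] [Module.Finite A B] {x : A}
    (hx : x ∈ (⊥ : Ideal A).jacobson) (hxB : IsSMulRegular B x)
    (hπA : Function.Surjective πA) (hπB : Function.Surjective πB)
    (hπ : ∀ a, πB (algebraMap A B a) = algebraMap A' B' (πA a))
    (hkerA : RingHom.ker πA = Ideal.span {x})
    (hkerB : RingHom.ker πB = (Ideal.span {x}).map (algebraMap A B))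
    (h : IsFrobeniusExtension A' B') : IsFrobeniusExtension A B := by
  obtain ⟨_, _, Ψ, hΨ⟩ := h
  have := finitePresentation_of_finite A B
  let π : B →ₛₗ[πA] B' :=
    { πB with map_smul' := fun a b ↦ by simp [Algebra.smul_def, hπ] }
  have := free_of_quotient (π := π) hx hxB hπA hπB hkerA <| by
    rw [← Submodule.ideal_span_singleton_smul, Ideal.smul_top_eq_map, ← hkerB]
    rfl
  obtain ⟨Φ, hΦ⟩ := exists_dual_lift hπA π Ψ
  exact ⟨inferInstance, this, Φ, .of_quotient hπA hπB hπ (by simpa using hx) hkerA hkerB hΦ hΨ⟩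

end Deformation

section AdjoinRoot

open Polynomial

variable {A A' B B' : Type*} [CommRing A] [CommRing A'] [CommRing B] [CommRing B'] [Algebra A B]
  [Algebra A' B'] {πA : A →+* A'} {πB : B →+* B'} {x : A} {q : ℕ}

theorem mem_jacobson_bot_of_pow_eq [Algebra.IsIntegral A B] (hx : x ∈ (⊥ : Ideal A).jacobson)
    {z : B} (hz : z ^ q = algebraMap A B x) : z ∈ (⊥ : Ideal B).jacobson := by
  refine Ideal.mem_sInf.2 fun {M} hM ↦ ?_
  have := hM.2
  have hxM : x ∈ M.comap (algebraMap A B) :=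
    Ideal.mem_sInf.1 hx ⟨bot_le, Ideal.isMaximal_comap_of_isIntegral_of_isMaximal M⟩
  rw [Ideal.mem_comap, ← hz] at hxM
  exact hM.2.isPrime.mem_of_pow_mem q hxM

theorem adjoinRoot_root_pow (q : ℕ) (x : A) :
    AdjoinRoot.root (X ^ q - C x) ^ q = algebraMap A _ x := by
  rw [← sub_eq_zero, ← AdjoinRoot.eval₂_root, eval₂_sub, eval₂_C, eval₂_pow, eval₂_X]
  rfl

theorem ker_adjoinRoot_lift_zero (hx : RingHom.ker πA = Ideal.span {x}) (hq : q ≠ 0)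
    (h : (X ^ q - C x).eval₂ πA 0 = 0) :
    RingHom.ker (AdjoinRoot.lift πA 0 h) = Ideal.span {AdjoinRoot.root (X ^ q - C x)} := by
  refine le_antisymm (fun f hf ↦ ?_) ?_
  · induction f using AdjoinRoot.induction_on with | ih f =>
    have hf0 : f.coeff 0 ∈ Ideal.span {x} := by
      simpa [← hx, RingHom.mem_ker, eval₂_at_zero] using hf
    obtain ⟨a, ha⟩ := Ideal.mem_span_singleton.1 hf0
    rw [← f.divX_mul_X_add, ha, map_add, map_mul, AdjoinRoot.mk_X]
    refine Ideal.add_mem _ (Ideal.mul_mem_left _ _ (Ideal.mem_span_singleton_self _)) ?_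
    rw [C_mul, map_mul, AdjoinRoot.mk_C, AdjoinRoot.mk_C, ← AdjoinRoot.algebraMap_eq,
      ← adjoinRoot_root_pow]
    exact Ideal.mul_mem_right _ _ <| Ideal.pow_mem_of_mem _ (Ideal.mem_span_singleton_self _) _
      (Nat.pos_of_ne_zero hq)
  · rw [Ideal.span_singleton_le_iff_mem, RingHom.mem_ker, AdjoinRoot.lift_root]

theorem IsFrobeniusExtension.of_pow_eq [IsNoetherianRing A] [Module.Finite A B] {z : B}
    (hx : x ∈ (⊥ : Ideal A).jacobson) (hq : q ≠ 0) (hzx : z ^ q = algebraMap A B x)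
    (hz : IsSMulRegular B z) (hπA : Function.Surjective πA) (hπB : Function.Surjective πB)
    (hπ : ∀ a, πB (algebraMap A B a) = algebraMap A' B' (πA a))
    (hkerA : RingHom.ker πA = Ideal.span {x}) (hkerB : RingHom.ker πB = Ideal.span {z})
    (h : IsFrobeniusExtension A' B') : IsFrobeniusExtension A B := by
  let f : A[X] := X ^ q - C x
  have eval_zero : f.eval₂ πA 0 = 0 := by
    have : πA x = 0 := by rw [← RingHom.mem_ker, hkerA]; exact Ideal.mem_span_singleton_self x
    simp [f, hq, this]
  let πC := AdjoinRoot.lift πA 0 eval_zero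
  have hAC : IsFrobeniusExtension A (AdjoinRoot f) :=
    isFrobeniusExtension_of_powerBasis (AdjoinRoot.powerBasis' (monic_X_pow_sub_C x hq))
  have := hAC.finite
  let toB : AdjoinRoot f →+* B := AdjoinRoot.lift (algebraMap A B) z (by simp [f, hzx])
  have toB_root : toB (AdjoinRoot.root f) = z := AdjoinRoot.lift_root _
  algebraize [toB]
  have : IsScalarTower A (AdjoinRoot f) B := .of_algebraMap_eq fun a ↦ (AdjoinRoot.lift_of _).symm
  have := isNoetherian_of_isNoetherianRing_of_finite A (AdjoinRoot f)
  have := Module.Finite.of_restrictScalars_finite A (AdjoinRoot f) B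
  have compat : πB.comp toB = (algebraMap A' B').comp πC := by
    ext a
    · simpa [toB, πC] using hπ a
    · simp [toB_root, πC, ← RingHom.mem_ker, hkerB]
  have root_mem : AdjoinRoot.root f ∈ (⊥ : Ideal (AdjoinRoot f)).jacobson :=
    mem_jacobson_bot_of_pow_eq (q := q) hx (adjoinRoot_root_pow q x)
  have root_regular : IsSMulRegular B (AdjoinRoot.root f) := by
    rwa [← isSMulRegular_algebraMap_iff (A := B), RingHom.algebraMap_toAlgebra, toB_root]
  refine hAC.trans (.of_quotient root_mem root_regular (πA := πC) (fun a' ↦ ?_) hπB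
    (RingHom.congr_fun compat) (ker_adjoinRoot_lift_zero hkerA hq eval_zero) ?_ h)
  · obtain ⟨a, rfl⟩ := hπA a'
    exact ⟨_, AdjoinRoot.lift_of eval_zero⟩
  · rw [hkerB, Ideal.map_span, Set.image_singleton, RingHom.algebraMap_toAlgebra, toB_root]

end AdjoinRoot

section RegularLocalRing

theorem IsRegularLocal.isRegularLocalRing {R : Type*} [CommRing R] [IsLocalRing R]
    (h : IsRegularLocal R) : IsRegularLocalRing R := by
  obtain ⟨_, d, x, hd, hx⟩ := h
  refine .of_spanFinrank_maximalIdeal_le _ ?_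
  rw [hd, hx, Nat.cast_le]
  calc (Ideal.span (Set.range x)).spanFinrank
      ≤ (Set.range x).ncard := Submodule.spanFinrank_span_le_ncard_of_finite (Set.finite_range x)
    _ ≤ d := by
      simpa [Set.ncard_univ, Set.image_univ] using Set.ncard_image_le (f := x) Set.finite_univ

theorem ne_zero_of_mem_ringCirc {R : Type*} [CommRing R] [Nontrivial R] {c : R}
    (hc : c ∈ ringCirc R) : c ≠ 0 := by
  rintro rfl
  obtain ⟨P, hP⟩ := Ideal.nonempty_minimalPrimes (bot_ne_top (α := Ideal R))
  exact hc P hP P.zero_mem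

theorem isLocalRing_quotient_span_singleton {R : Type*} [CommRing R] [IsLocalRing R] {y : R}
    (hy : y ∈ maximalIdeal R) : IsLocalRing (R ⧸ Ideal.span {y}) := by
  have : Nontrivial (R ⧸ Ideal.span {y}) := by
    rwa [Ideal.Quotient.nontrivial_iff, Ne, Ideal.span_singleton_eq_top]
  exact .of_surjective' _ Ideal.Quotient.mk_surjective

section LocalRing

variable {R : Type*} [CommRing R] [IsLocalRing R] [IsNoetherianRing R]

theorem exists_mem_ringCirc_notMem_sq (h : maximalIdeal R ∉ minimalPrimes R) :
    ∃ y ∈ maximalIdeal R, y ∉ maximalIdeal R ^ 2 ∧ y ∈ ringCirc R := by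
  have not_subset : ¬ (maximalIdeal R : Set R) ⊆
      ⋃ P ∈ insert (maximalIdeal R ^ 2) (minimalPrimes R), (P : Set R) := by
    rw [Ideal.subset_union_prime_finite (f := fun P ↦ P)
      ((minimalPrimes.finite_of_isNoetherianRing R).insert _) (maximalIdeal R ^ 2)
      (maximalIdeal R ^ 2) fun P hP hP2 _ ↦ (Set.mem_of_mem_insert_of_ne hP hP2).1.1]
    rintro ⟨P, rfl | hP, hle⟩
    · have hbot : maximalIdeal R = ⊥ :=
        Submodule.eq_bot_of_le_smul_of_le_jacobson_bot _ _ (IsNoetherian.noetherian _)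
          (by rwa [smul_eq_mul, ← pow_two]) (maximalIdeal_le_jacobson _)
      exact h ⟨⟨inferInstance, bot_le⟩, fun _ _ _ ↦ hbot.trans_le bot_le⟩
    · have := hP.1.1
      exact h ((le_maximalIdeal this.ne_top).antisymm hle ▸ hP)
  obtain ⟨y, hy, hyP⟩ := Set.not_subset.1 not_subset
  simp only [Set.mem_iUnion₂, not_exists] at hyP
  exact ⟨y, hy, hyP _ (Set.mem_insert _ _), fun P hP ↦ hyP P (Set.mem_insert_of_mem _ hP)⟩

theorem exists_maximalIdeal_eq_span_insert {y : R} (hy : y ∈ maximalIdeal R)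
    (hy2 : y ∉ maximalIdeal R ^ 2) : ∃ s : Finset R,
      s.card + 1 = (maximalIdeal R).spanFinrank ∧ maximalIdeal R = Ideal.span (insert y s) := by
  classical
  obtain ⟨t, ht, hspan⟩ := Submodule.FG.exists_span_finset_card_eq_spanFinrank
    (IsNoetherian.noetherian (maximalIdeal R))
  have t_subset (x : R) (hx : x ∈ t) : x ∈ maximalIdeal R := hspan ▸ Submodule.subset_span hx
  obtain ⟨a, -, ha⟩ := Submodule.mem_span_finset.1 (hspan ▸ hy)
  obtain ⟨x, hx, hax⟩ : ∃ x ∈ t, IsUnit (a x) := by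
    by_contra! hcon
    refine hy2 (ha ▸ Ideal.sum_mem _ fun x hx ↦ ?_)
    rw [pow_two]
    exact Ideal.mul_mem_mul (hcon x hx) (t_subset x hx)
  refine ⟨t.erase x, ?_, le_antisymm ?_ (Ideal.span_le.2 (Set.insert_subset hy ?_))⟩
  · rw [Finset.card_erase_add_one hx, ht]
  · have erase_le : (t.erase x : Set R) ⊆ Ideal.span (insert y (t.erase x : Set R)) :=
      (Set.subset_insert _ _).trans Ideal.subset_span
    have x_mem : x ∈ Ideal.span (insert y (t.erase x : Set R)) := by
      rw [← Ideal.unit_mul_mem_iff_mem _ hax, ← smul_eq_mul,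
        eq_sub_of_add_eq ((Finset.add_sum_erase _ _ hx).trans ha)]
      exact sub_mem (Ideal.subset_span (Set.mem_insert _ _))
        (Ideal.sum_mem _ fun z hz ↦ Ideal.mul_mem_left _ _ (erase_le hz))
    calc maximalIdeal R
        = Ideal.span (insert x (t.erase x : Set R)) := by
          rw [← Finset.coe_insert, Finset.insert_erase hx]
          exact hspan.symm
      _ ≤ _ := Ideal.span_le.2 (Set.insert_subset x_mem erase_le)
  · exact fun z hz ↦ t_subset z (Finset.mem_of_mem_erase hz)

theorem spanFinrank_maximalIdeal_quotient_add_one_le {y : R} (hy : y ∈ maximalIdeal R)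
    (hy2 : y ∉ maximalIdeal R ^ 2) [IsLocalRing (R ⧸ Ideal.span {y})] :
    (maximalIdeal (R ⧸ Ideal.span {y})).spanFinrank + 1 ≤ (maximalIdeal R).spanFinrank := by
  obtain ⟨s, hs, hspan⟩ := exists_maximalIdeal_eq_span_insert hy hy2
  let mk := Ideal.Quotient.mk (Ideal.span {y})
  have mk_y : mk y = 0 := Ideal.Quotient.eq_zero_iff_mem.2 (Ideal.mem_span_singleton_self y)
  rw [← hs, ← map_maximalIdeal_of_surjective mk Ideal.Quotient.mk_surjective, hspan,
    Ideal.map_span, Set.image_insert_eq, mk_y, Ideal.span_insert_zero]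
  gcongr
  calc (Ideal.span (mk '' s)).spanFinrank
      ≤ (mk '' s).ncard :=
        Submodule.spanFinrank_span_le_ncard_of_finite (s.finite_toSet.image _)
    _ ≤ s.card := by simpa using Set.ncard_image_le (f := mk) s.finite_toSet

end LocalRing

variable {R : Type*} [CommRing R] [IsRegularLocalRing R]

theorem maximalIdeal_notMem_minimalPrimes (h : ¬ IsField R) :
    maximalIdeal R ∉ minimalPrimes R := by
  refine mt (fun hmin ↦ isField_iff_maximalIdeal_eq.2 ?_) h
  rw [← Submodule.spanFinrank_eq_zero_iff_eq_bot (IsNoetherian.noetherian _),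
    ← Nat.cast_eq_zero (R := WithBot ℕ∞), IsRegularLocalRing.spanFinrank_maximalIdeal,
    ← maximalIdeal_height_eq_ringKrullDim, Ideal.height_eq_zero_iff.2 hmin]
  rfl

theorem isRegularLocalRing_quotient_span_singleton {y : R} (hy : y ∈ maximalIdeal R)
    (hy2 : y ∉ maximalIdeal R ^ 2) : IsRegularLocalRing (R ⧸ Ideal.span {y}) := by
  have := isLocalRing_quotient_span_singleton hy
  refine .of_spanFinrank_maximalIdeal_le _ (ENat.WithBot.add_le_add_one_right_iff.1 ?_)
  calc ((maximalIdeal (R ⧸ Ideal.span {y})).spanFinrank + 1 : WithBot ℕ∞)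
      ≤ (maximalIdeal R).spanFinrank :=
        mod_cast spanFinrank_maximalIdeal_quotient_add_one_le hy hy2
    _ = ringKrullDim R := IsRegularLocalRing.spanFinrank_maximalIdeal
    _ ≤ ringKrullDim (R ⧸ Ideal.span {y}) + 1 := by
      have hyJ : y ∈ Ring.jacobson R := Ideal.jacobson_bot (R := R) ▸ maximalIdeal_le_jacobson _ hy
      rw [← Nat.cast_one, ← Finset.card_singleton y, ← Finset.coe_singleton]
      exact ringKrullDim_le_ringKrullDim_quotient_add_card {y} (by simpa using hyJ)

universe u

theorem regularLocalRing_induction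
    {motive : ∀ (R : Type u) [CommRing R] [IsRegularLocalRing R], Prop}
    (field : ∀ (R : Type u) [CommRing R] [IsRegularLocalRing R], IsField R → motive R)
    (quotient : ∀ (R : Type u) [CommRing R] [IsRegularLocalRing R] (y : R), y ∈ maximalIdeal R →
      y ∈ ringCirc R → ∀ [IsRegularLocalRing (R ⧸ Ideal.span {y})],
      motive (R ⧸ Ideal.span {y}) → motive R)
    (R : Type u) [CommRing R] [IsRegularLocalRing R] : motive R := by
  induction hn : (maximalIdeal R).spanFinrank using Nat.strong_induction_on generalizing R with
  | h n ih =>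
    by_cases hR : IsField R
    · exact field R hR
    obtain ⟨y, hy, hy2, hyR⟩ :=
      exists_mem_ringCirc_notMem_sq (maximalIdeal_notMem_minimalPrimes hR)
    have := isRegularLocalRing_quotient_span_singleton hy hy2
    exact quotient R y hy hyR
      (ih _ (hn ▸ spanFinrank_maximalIdeal_quotient_add_one_le hy hy2) _ rfl)

theorem isDomain_of_isRegularLocalRing (R : Type*) [CommRing R] [IsRegularLocalRing R] :
    IsDomain R := by
  refine regularLocalRing_induction (motive := fun R _ _ ↦ IsDomain R)
    (fun R _ _ hR ↦ hR.isDomain) (fun R _ _ y hy hyR _ h ↦ ?_) R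
  have := (Ideal.Quotient.isDomain_iff_prime _).1 h
  obtain ⟨P, hP, hle⟩ := Ideal.exists_minimalPrimes_le (bot_le (a := Ideal.span {y}))
  have P_eq_bot : P = ⊥ := by
    refine Submodule.eq_bot_of_le_smul_of_le_jacobson_bot (maximalIdeal R) _
      (IsNoetherian.noetherian _) (fun t ht ↦ ?_) (maximalIdeal_le_jacobson _)
    obtain ⟨u, rfl⟩ := Ideal.mem_span_singleton.1 (hle ht)
    exact Submodule.smul_mem_smul hy ((hP.1.1.mem_or_mem ht).resolve_left (hyR P hP))
  have : (⊥ : Ideal R).IsPrime := P_eq_bot ▸ hP.1.1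
  exact .of_bot_isPrime R

end RegularLocalRing

section FrobeniusRegular

theorem charP_of_ringHom {R R' : Type*} [CommRing R] [CommRing R'] [Nontrivial R'] (f : R →+* R')
    (p : ℕ) [Fact p.Prime] [CharP R p] : CharP R' p := by
  rw [CharP.charP_iff_prime_eq_zero Fact.out, ← map_natCast f, CharP.cast_eq_zero, map_zero]

theorem isFrobeniusExtension_frobeniusPushforward (R : Type*) [CommRing R] [IsRegularLocalRing R]
    (p : ℕ) [Fact p.Prime] [CharP R p] (h : (frobenius R p).Finite) (e : ℕ) :
    IsFrobeniusExtension R (FrobeniusPushforward R p e) := by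
  revert h
  refine regularLocalRing_induction
    (motive := fun R _ _ ↦ ∀ [CharP R p], (frobenius R p).Finite →
      IsFrobeniusExtension R (FrobeniusPushforward R p e))
    (fun R _ _ hR _ h ↦ ?_) (fun R _ _ y hy hyR _ ih _ h ↦ ?_) R
  · have := FrobeniusPushforward.finite_iff.2 (iterateFrobenius_finite h e)
    exact isFrobeniusExtension_of_isField hR ((of R p e).symm.toMulEquiv.isField hR)
  · have := isDomain_of_isRegularLocalRing R
    have := FrobeniusPushforward.finite_iff.2 (iterateFrobenius_finite h e)
    have := charP_of_ringHom (Ideal.Quotient.mk (Ideal.span {y})) p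
    let π := Ideal.Quotient.mk (Ideal.span {y})
    have : IsDomain (FrobeniusPushforward R p e) := inferInstanceAs (IsDomain R)
    have of_y_ne_zero : of R p e y ≠ 0 := ne_zero_of_mem_ringCirc hyR
    have ker_map : RingHom.ker (map p e π) = Ideal.span {of R p e y} := Ideal.mk_ker (R := R)
    exact .of_pow_eq (q := p ^ e) (maximalIdeal_le_jacobson _ hy)
      (pow_ne_zero _ (Fact.out : p.Prime).ne_zero) rfl (.of_ne_zero of_y_ne_zero)
      Ideal.Quotient.mk_surjective (map_surjective Ideal.Quotient.mk_surjective)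
      (map_algebraMap π) Ideal.mk_ker ker_map
      (ih (frobenius_finite_of_surjective h π Ideal.Quotient.mk_surjective))

end FrobeniusRegular

section Fedder

theorem IsDualGenerator.mem_map_iff {A B : Type*} [CommRing A] [CommRing B] [Algebra A B]
    [Module.Finite A B] [Free A B] {Φ : Dual A B} (hΦ : IsDualGenerator Φ) {I : Ideal A} {b : B} :
    b ∈ I.map (algebraMap A B) ↔ ∀ g, Φ (g * b) ∈ I := by
  rw [← Submodule.restrictScalars_mem A, ← Ideal.smul_top_eq_map, mem_smul_top_iff_forall_dual]
  refine ⟨fun h g ↦ h ((LinearMap.mul A B).compr₂ Φ g), fun h φ ↦ ?_⟩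
  obtain ⟨g, hg⟩ := hΦ φ
  exact hg b ▸ h g

theorem IsFrobeniusExtension.exists_dual_iff_exists_mem_colon {A B : Type*} [CommRing A]
    [IsLocalRing A] [CommRing B] [Algebra A B] (h : IsFrobeniusExtension A B) {I : Ideal A}
    {J : Ideal B} {c : B} :
    (∃ φ : Dual A B, (∀ j ∈ J, φ j ∈ I) ∧ IsUnit (φ c)) ↔
      ∃ g ∈ (I.map (algebraMap A B)).colon J, c * g ∉ (maximalIdeal A).map (algebraMap A B) := by
  obtain ⟨_, _, Φ, hΦ⟩ := h
  simp only [Submodule.mem_colon, hΦ.mem_map_iff, not_forall, mem_maximalIdeal, mem_nonunits_iff,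
    not_not, smul_eq_mul]
  constructor
  · rintro ⟨φ, hφJ, hφc⟩
    obtain ⟨g, hg⟩ := hΦ φ
    refine ⟨g, fun j hj h ↦ ?_, 1, ?_⟩
    · rw [mul_left_comm, ← hg]
      exact hφJ _ (J.mul_mem_left h hj)
    · rwa [one_mul, mul_comm, ← hg]
  · rintro ⟨g, hgJ, h, hc⟩
    refine ⟨(LinearMap.mul A B).compr₂ Φ (h * g), fun j hj ↦ ?_, ?_⟩
    · simpa [mul_assoc] using hgJ j hj h
    · simpa [mul_assoc, mul_comm c] using hc

theorem frobSplitsWith_quotient_iff {R : Type*} [CommRing R] [IsLocalRing R] {p e : ℕ}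
    [Fact p.Prime] [CharP R p] [Projective R (FrobeniusPushforward R p e)] {I : Ideal R}
    [CharP (R ⧸ I) p] {c : R} : FrobSplitsWith p (Ideal.Quotient.mk I c) e ↔
      ∃ φ : Dual R (FrobeniusPushforward R p e),
        (∀ j ∈ I.comap (of R p e).symm, φ j ∈ I) ∧ IsUnit (φ (of R p e c)) := by
  let π := Ideal.Quotient.mk I
  let F_π : FrobeniusPushforward R p e →ₛₗ[π] FrobeniusPushforward (R ⧸ I) p e :=
    { map p e π with map_smul' := fun r x ↦ by simp [Algebra.smul_def, map_algebraMap] }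
  have F_π_eq_zero {x} : F_π x = 0 ↔ x ∈ I.comap (of R p e).symm :=
    Ideal.Quotient.eq_zero_iff_mem
  have F_π_of : F_π (of R p e c) = of (R ⧸ I) p e (π c) := map_of π c
  rw [frobSplitsWith_iff]
  constructor
  · rintro ⟨ψ, hψ⟩
    obtain ⟨φ, hφ⟩ := exists_dual_lift Ideal.Quotient.mk_surjective F_π ψ
    refine ⟨φ, fun j hj ↦ ?_, ?_⟩
    · rw [← Ideal.Quotient.eq_zero_iff_mem, hφ, F_π_eq_zero.2 hj, map_zero]
    · have : Nontrivial (R ⧸ I) :=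
        CharP.nontrivial_of_char_ne_one (Fact.out : p.Prime).ne_one
      have := IsLocalHom.of_surjective π Ideal.Quotient.mk_surjective
      refine .of_map π _ ?_
      rw [hφ, F_π_of, hψ]
      exact isUnit_one
  · rintro ⟨φ, hφI, hφc⟩
    obtain ⟨ψ, hψ⟩ := exists_dual_descent Ideal.Quotient.mk_surjective
      (map_surjective Ideal.Quotient.mk_surjective) φ
      fun x hx ↦ Ideal.Quotient.eq_zero_iff_mem.2 (hφI x (F_π_eq_zero.1 hx))
    obtain ⟨u, hu⟩ := hφc.exists_left_inv
    refine ⟨π u • ψ, ?_⟩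
    rw [LinearMap.smul_apply, ← F_π_of, hψ, smul_eq_mul, ← map_mul, hu, map_one]

theorem frobSplitsWith_quotient_iff_not_mul_colon_le {R : Type*} [CommRing R]
    [IsRegularLocalRing R] {p : ℕ} [Fact p.Prime] [CharP R p] (hR : (frobenius R p).Finite)
    {I : Ideal R} (hI : I ≠ ⊤) {c : R} {e : ℕ} :
    FrobSplitsWith p (Ideal.Quotient.mk I c) e ↔
      ¬ Ideal.span {c} * (I.bracketPow (p ^ e)).colon I ≤ (maximalIdeal R).bracketPow (p ^ e) := by
  have hFR := isFrobeniusExtension_frobeniusPushforward R p hR e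
  have := hFR.free
  have := Ideal.Quotient.nontrivial_iff.2 hI
  have := charP_of_ringHom (Ideal.Quotient.mk I) p
  rw [frobSplitsWith_quotient_iff, hFR.exists_dual_iff_exists_mem_colon,
    Ideal.span_singleton_mul_le_iff]
  push Not
  -- `of` carries `J.bracketPow (p ^ e)` definitionally to the extension `J.map (algebraMap _ _)`
  rfl

end Fedder

section Splitting

variable {R : Type*} [CommRing R] {p e : ℕ} {a b c : R}

theorem FrobSplitsWith.of_dvd (hb : FrobSplitsWith p b e) (hab : a ∣ b) :
    FrobSplitsWith p a e := by
  obtain ⟨φ, hφ, hφb⟩ := hb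
  obtain ⟨x, rfl⟩ := hab
  refine ⟨φ.comp (AddMonoidHom.mulLeft x), fun r y ↦ ?_, ?_⟩
  · simp only [AddMonoidHom.comp_apply, AddMonoidHom.coe_mulLeft, mul_left_comm x, hφ]
  · rwa [AddMonoidHom.comp_apply, AddMonoidHom.coe_mulLeft, mul_comm]

theorem FrobSplitsWith.mem_nonZeroDivisors [NeZero p] (hc : FrobSplitsWith p c e) :
    c ∈ nonZeroDivisors R := by
  obtain ⟨φ, hφ, hφc⟩ := hc
  refine mem_nonZeroDivisors_iff_right.2 fun x hx ↦ ?_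
  have hxc : x ^ p ^ e * c = 0 := by
    rw [← mul_pow_sub_one (NeZero.ne (p ^ e)), mul_right_comm, hx, zero_mul]
  rw [← mul_one x, ← hφc, ← hφ, hxc, map_zero]

theorem algebraMap_mem_ringCirc {A : Type*} [CommRing A] [Algebra R A] (M : Submonoid R)
    [IsLocalization M A] (ha : a ∈ ringCirc R) : algebraMap R A a ∈ ringCirc A := by
  intro P hP
  have h_map := IsLocalization.minimalPrimes_map M A (⊥ : Ideal R)
  rw [Ideal.map_bot] at h_map
  exact ha _ (h_map.subset hP)

variable [ExpChar R p]

theorem FrobSplitsWith.of_dual_apply_eq {d : ℕ} {φ : Dual R (FrobeniusPushforward R p d)}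
    (hφ : φ (of R p d a) = b) (hb : FrobSplitsWith p b e) : FrobSplitsWith p a (d + e) := by
  obtain ⟨χ, hχ, hχb⟩ := hb
  refine ⟨χ.comp (φ.toAddMonoidHom.comp (of R p d).toAddMonoidHom), fun r x ↦ ?_, ?_⟩
  · change χ (φ (of R p d (r ^ p ^ (d + e) * x))) = r * χ (φ (of R p d x))
    rw [add_comm d, pow_add, pow_mul, ← smul_of, map_smul, smul_eq_mul, hχ]
  · exact (congrArg χ hφ).trans hχb

theorem FrobSplitsWith.exists_pow (hc : FrobSplitsWith p c e) (n : ℕ) :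
    ∃ e', FrobSplitsWith p (c ^ n) e' := by
  obtain ⟨φ, hφ⟩ := frobSplitsWith_iff.1 hc
  induction n with
  | zero => exact ⟨0, AddMonoidHom.id R, by simp⟩
  | succ n ih =>
    obtain ⟨e', he'⟩ := ih
    have hφ_pow : φ (of R p e ((c ^ n) ^ p ^ e * c)) = c ^ n := by
      rw [← smul_of, map_smul, hφ, smul_eq_mul, mul_one]
    refine ⟨e + e', (he'.of_dual_apply_eq hφ_pow).of_dvd ?_⟩
    rw [pow_succ]
    exact mul_dvd_mul_right (dvd_pow_self _ (expChar_pow_pos R p e).ne') c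

theorem FrobSplitsWith.exists_dual_apply_eq_pow [IsNoetherianRing R] (hR : (frobenius R p).Finite)
    (ha : FrobSplitsWith p (algebraMap R (Localization.Away c) a) e) :
    ∃ (φ : Dual R (FrobeniusPushforward R p e)) (n : ℕ), φ (of R p e a) = c ^ n := by
  obtain ⟨ψ, hψ, hψa⟩ := ha
  let ι := Algebra.linearMap R (Localization.Away c)
  let θ : FrobeniusPushforward R p e →ₗ[R] Localization.Away c :=
    { (ψ.comp ι.toAddMonoidHom).comp (of R p e).symm.toAddMonoidHom with
      map_smul' := fun r x ↦ by
        change ψ (ι (r ^ p ^ e * (of R p e).symm x)) = r • ψ (ι ((of R p e).symm x))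
        simp only [ι, Algebra.linearMap_apply, map_mul, map_pow, hψ, Algebra.smul_def] }
  have := finite_iff.2 (iterateFrobenius_finite hR e)
  have := finitePresentation_of_finite R (FrobeniusPushforward R p e)
  obtain ⟨φ, ⟨_, n, rfl⟩, hφ⟩ :=
    FinitePresentation.exists_lift_of_isLocalizedModule (.powers c) ι θ
  have hφa : ι (φ (of R p e a)) = ι (c ^ n) := by
    have hθa : θ (of R p e a) = 1 := hψa
    rw [← LinearMap.comp_apply, hφ, LinearMap.smul_apply, hθa]
    exact (Algebra.algebraMap_eq_smul_one (A := Localization.Away c) (c ^ n)).symm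
  obtain ⟨⟨_, m, rfl⟩, hm⟩ := IsLocalization.exists_of_eq (M := .powers c) hφa
  exact ⟨c ^ m • φ, m + n, hm.trans (pow_add c m n).symm⟩

theorem FFinite.stronglyFRegular_of_localizationAway [IsNoetherianRing R] (hR : FFinite R p)
    (hc : FrobSplitsWith p c e) (hloc : StronglyFRegular (Localization.Away c) p) :
    StronglyFRegular R p := by
  obtain ⟨-, _, hsplit⟩ := hloc
  have : NeZero p := ⟨(expChar_pos R p).ne'⟩
  have hinj : Function.Injective (algebraMap R (Localization.Away c)) :=
    IsLocalization.injective _ (Submonoid.powers_le.2 hc.mem_nonZeroDivisors)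
  refine ⟨hR, isReduced_of_injective _ hinj, fun d hd ↦ ?_⟩
  obtain ⟨e₁, hd₁⟩ := hsplit _ (algebraMap_mem_ringCirc (.powers c) hd)
  obtain ⟨φ, n, hφ⟩ := hd₁.exists_dual_apply_eq_pow (fFinite_iff_frobenius_finite.1 hR)
  obtain ⟨e₂, hcn⟩ := hc.exists_pow n
  exact ⟨e₁ + e₂, hcn.of_dual_apply_eq hφ⟩

end Splitting

section Local

theorem exists_notMem_mul_eq_zero_of_mem_minimalPrimes {R : Type*} [CommRing R] [IsReduced R]
    {P : Ideal R} (hP : P ∈ minimalPrimes R) {c : R} (hc : c ∈ P) : ∃ y ∉ P, y * c = 0 := by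
  have := hP.isPrime
  have hc_mem := Ideal.mem_map_of_mem (algebraMap R (Localization.AtPrime P)) hc
  rw [← IsLocalization.AtPrime.radical_map_of_mem_minimalPrimes _ P ⊥ hP, Ideal.map_bot,
    Ideal.isRadical_bot.radical, Ideal.mem_bot,
    IsLocalization.map_eq_zero_iff P.primeCompl] at hc_mem
  obtain ⟨⟨y, hy⟩, hyc⟩ := hc_mem
  exact ⟨y, hy, hyc⟩

theorem exists_mul_eq_zero_and_add_mem_ringCirc {R : Type*} [CommRing R] [IsNoetherianRing R]
    [IsReduced R] (c : R) : ∃ y, y * c = 0 ∧ c + y ∈ ringCirc R := by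
  let s := {P ∈ minimalPrimes R | c ∈ P}
  have hs : s.Finite := (minimalPrimes.finite_of_isNoetherianRing R).subset (Set.sep_subset _ _)
  have h_avoid : ¬ (Ideal.torsionOf R R c : Set R) ⊆ ⋃ P ∈ s, P := by
    rw [Ideal.subset_union_prime_finite hs (f := fun P ↦ P) ⊥ ⊥ fun P hP _ _ ↦ hP.1.isPrime]
    rintro ⟨P, ⟨hP, hcP⟩, hle⟩
    obtain ⟨y, hyP, hyc⟩ := exists_notMem_mul_eq_zero_of_mem_minimalPrimes hP hcP
    exact hyP (hle hyc)
  obtain ⟨y, hyc, hy⟩ := Set.not_subset.1 h_avoid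
  replace hyc : y * c = 0 := hyc
  refine ⟨y, hyc, fun P hP hadd ↦ ?_⟩
  by_cases hcP : c ∈ P
  · exact hy (Set.mem_biUnion (⟨hP, hcP⟩ : P ∈ s) ((P.add_mem_iff_right hcP).1 hadd))
  · have hyP : y ∈ P := (hP.isPrime.mem_or_mem (hyc ▸ P.zero_mem)).resolve_right hcP
    exact hcP ((P.add_mem_iff_left hyP).1 hadd)

theorem StronglyFRegular.mem_ringCirc_of_ne_zero {R : Type*} [CommRing R] [IsLocalRing R]
    [IsNoetherianRing R] {p : ℕ} [NeZero p] (h : StronglyFRegular R p) {c : R} (hc : c ≠ 0) :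
    c ∈ ringCirc R := by
  obtain ⟨-, _, hsplit⟩ := h
  obtain ⟨y, hyc, hadd⟩ := exists_mul_eq_zero_and_add_mem_ringCirc c
  obtain ⟨e, φ, hφ, hφ_add⟩ := hsplit _ hadd
  have mul_apply_eq_zero {s t : R} (hst : s * t = 0) : s * φ t = 0 := by
    rw [← hφ, ← pow_sub_one_mul (NeZero.ne (p ^ e)), mul_assoc, hst, mul_zero, map_zero]
  rw [map_add] at hφ_add
  rcases isUnit_or_isUnit_of_add_one hφ_add with hu | hu
  · have hy : y = 0 := hu.mul_left_eq_zero.1 (mul_apply_eq_zero hyc)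
    rwa [hy, add_zero] at hadd
  · exact absurd (hu.mul_left_eq_zero.1 (mul_apply_eq_zero (mul_comm y c ▸ hyc))) hc

end Local

theorem glassbrenner_criterion_general (S : Type*) [CommRing S] [IsRegularLocalRing S] (p : ℕ)
    [Fact p.Prime] [CharP S p] (hFF : FFinite S p) (I : Ideal S) (c : S) (hc : c ∉ I)
    (hloc : StronglyFRegular (Localization.Away (Ideal.Quotient.mk I c)) p) :
    StronglyFRegular (S ⧸ I) p ↔
      ∃ e : ℕ, ¬ (Ideal.span {c} * Submodule.colon (I.bracketPow (p ^ e)) I ≤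
          (maximalIdeal S).bracketPow (p ^ e)) := by
  let π := Ideal.Quotient.mk I
  have hI : I ≠ ⊤ := fun h ↦ hc (h ▸ Submodule.mem_top)
  have : Nontrivial (S ⧸ I) := Ideal.Quotient.nontrivial_iff.2 hI
  have : IsLocalRing (S ⧸ I) := .of_surjective' π Ideal.Quotient.mk_surjective
  have := charP_of_ringHom π p
  have hS := fFinite_iff_frobenius_finite.1 hFF
  simp_rw [← frobSplitsWith_quotient_iff_not_mul_colon_le hS hI]
  constructor
  · intro h
    have hc₀ : π c ≠ 0 := Ideal.Quotient.eq_zero_iff_mem.not.2 hc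
    exact h.2.2 _ (h.mem_ringCirc_of_ne_zero hc₀)
  · rintro ⟨e, he⟩
    have hFR := frobenius_finite_of_surjective hS π Ideal.Quotient.mk_surjective
    exact (fFinite_iff_frobenius_finite.2 hFR).stronglyFRegular_of_localizationAway he hloc

/-- **Glassbrenner's criterion.** Let `(S, 𝔫)` be an F-finite regular local ring of
characteristic `p`, `I` a radical ideal, `R = S/I` and `c ∈ S \ I` such that the
localization of `R` at the image of `c` is strongly F-regular. Then `R` is strongly
F-regular if and only if `c·(I^{[p^e]} : I) ⊄ 𝔫^{[p^e]}` for some `e`. -/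
theorem glassbrenner_criterion (S : Type*) [CommRing S] [IsLocalRing S]
    [IsNoetherianRing S] (p : ℕ) [Fact p.Prime] [CharP S p]
    (hreg : IsRegularLocal S) (hFF : FFinite S p)
    (I : Ideal S) (hrad : I.IsRadical)
    (c : S) (hc : c ∉ I)
    (hloc : StronglyFRegular (Localization.Away (Ideal.Quotient.mk I c)) p) :
    StronglyFRegular (S ⧸ I) p ↔
      ∃ e : ℕ, ¬ (Ideal.span {c} * Submodule.colon (I.bracketPow (p ^ e)) I ≤
          (IsLocalRing.maximalIdeal S).bracketPow (p ^ e)) := by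
  have := hreg.isRegularLocalRing
  exact glassbrenner_criterion_general S p hFF I c hc hloc
end

section
/- (Monsky) Let (A, 𝔪) be a d-dimensional Noetherian local ring of prime characteristic p and let I ⊆ A be an 𝔪-primary ideal. Then the sequence of real numbers e ↦ ℓ_A(A/I^{[p^e]})/p^{ed} converges as e → ∞; that is, the Hilbert–Kunz multiplicity e_HK(I) := lim_{e→∞} ℓ_A(A/I^{[p^e]})/p^{ed} exists. -/
open IsLocalRing Filter Topology
open scoped TensorProduct

/-!
Suppose first that `C` has a perfect residue field and a finite Frobenius `F`. Then
`ℓ(F_* M / J^{[q]} F_* M) = ℓ(M / J^{[pq]} M)` for `q = p^e`, so pushing a module forward along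
Frobenius shifts its Hilbert–Kunz function. A high iterate `F^k_* M` is killed by the nilradical,
and it is generically a direct sum of copies of the modules `C / P`, for `P` a minimal prime: there
are maps in both directions whose composites are multiplication by an element `c` lying in no
minimal prime. Modules killed by `c` have dimension less than `d`, so their Hilbert–Kunz functions
are `O(q^{d-1})`, and this reduces the claim to `M = C / P`. Comparing `F_* (C / P)` with copies of
`C / P` in the same way, the normalised function `u` satisfies `u (e + 1) = ρ * u e + O(p^{-e})` for
a constant `ρ`. As `u` is bounded and nonnegative, it is monotone up to a summable error, hence
convergent, whether `ρ ≤ 1` or `1 ≤ ρ`.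

An arbitrary `A` is reduced to this case without changing the lengths `ℓ(A / I^{[q]})`: the
completion `Â` contains a coefficient field `k`, the ring `R = Â ⊗[k] k̄` is local, flat over `A`
with `𝔪_A R = 𝔪_R`, and the completion of `R` is Noetherian and has a finite Frobenius, because it
is complete with algebraically closed residue field `k̄` and finitely generated maximal ideal.
-/

namespace HilbertKunz

section Convergence

theorem exists_tendsto_of_succ_le_add_summable {u c : ℕ → ℝ} (hu : BddBelow (Set.range u))
    (hc : Summable c) (h : ∀ e, u (e + 1) ≤ u e + c e) : ∃ L, Tendsto u atTop (𝓝 L) := by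
  have hsum := hc.hasSum.tendsto_sum_nat
  have hanti : Antitone fun e => u e - ∑ i ∈ Finset.range e, c i := by
    refine antitone_nat_of_succ_le fun e => ?_
    rw [Finset.sum_range_succ]
    linarith [h e]
  have hbdd : BddBelow (Set.range fun e => u e - ∑ i ∈ Finset.range e, c i) := by
    obtain ⟨B, hB⟩ := hu
    obtain ⟨S, hS⟩ := hsum.bddAbove_range
    refine ⟨B - S, ?_⟩
    rintro _ ⟨e, rfl⟩
    exact sub_le_sub (hB ⟨e, rfl⟩) (hS ⟨e, rfl⟩)
  exact ⟨_, ((tendsto_atTop_ciInf hanti hbdd).add hsum).congr fun e => sub_add_cancel _ _⟩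

theorem exists_tendsto_of_summable_sub_mul {u : ℕ → ℝ} {ρ : ℝ} (hu₀ : ∀ e, 0 ≤ u e)
    (hu : BddAbove (Set.range u)) (h : Summable fun e => u (e + 1) - ρ * u e) :
    ∃ L, Tendsto u atTop (𝓝 L) := by
  rcases le_total ρ 1 with hρ | hρ
  · refine exists_tendsto_of_succ_le_add_summable ⟨0, Set.forall_mem_range.2 hu₀⟩ h fun e => ?_
    nlinarith [hu₀ e]
  · obtain ⟨B, hB⟩ := hu
    have hneg : BddBelow (Set.range fun e => -u e) :=
      ⟨-B, Set.forall_mem_range.2 fun e => neg_le_neg (hB ⟨e, rfl⟩)⟩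
    obtain ⟨L, hL⟩ := exists_tendsto_of_succ_le_add_summable hneg h.neg fun e => by
      nlinarith [hu₀ e]
    exact ⟨-L, by simpa only [neg_neg] using hL.neg⟩

end Convergence

section QuotLength

variable {C : Type*} [CommRing C] {L M N : Type*} [AddCommGroup L] [Module C L]
  [AddCommGroup M] [Module C M] [AddCommGroup N] [Module C N]

theorem length_le_add_of_exact (f : L →ₗ[C] M) (g : M →ₗ[C] N) (h : Function.Exact f g) :
    Module.length C M ≤ Module.length C L + Module.length C N := by
  rw [Module.length_eq_add_of_exact (LinearMap.ker g).subtype g.rangeRestrict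
    (Submodule.subtype_injective _) g.surjective_rangeRestrict fun x => by simp [Subtype.ext_iff],
    h.linearMap_ker_eq]
  exact add_le_add (Module.length_le_of_surjective f.rangeRestrict f.surjective_rangeRestrict)
    (Module.length_le_of_injective _ (Submodule.subtype_injective _))

/-- The length of `M / 𝔞M`. For `M = C` and `𝔞 = J^{[q]}` it is the Hilbert–Kunz function. -/
noncomputable def quotLength (𝔞 : Ideal C) (M : Type*) [AddCommGroup M] [Module C M] : ℕ∞ :=
  Module.length C (M ⧸ 𝔞 • (⊤ : Submodule C M))

variable (𝔞 : Ideal C)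

theorem quotLength_eq_length_tensorProduct :
    quotLength 𝔞 M = Module.length C ((C ⧸ 𝔞) ⊗[C] M) :=
  (TensorProduct.quotTensorEquivQuotSMul M 𝔞).length_eq.symm

theorem quotLength_le_of_surjective (f : M →ₗ[C] N) (hf : Function.Surjective f) :
    quotLength 𝔞 N ≤ quotLength 𝔞 M := by
  simp only [quotLength_eq_length_tensorProduct]
  exact Module.length_le_of_surjective _ (LinearMap.lTensor_surjective (C ⧸ 𝔞) hf)

theorem quotLength_le_add_quotLength_coker (f : M →ₗ[C] N) :
    quotLength 𝔞 N ≤ quotLength 𝔞 M + quotLength 𝔞 (N ⧸ LinearMap.range f) := by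
  simp only [quotLength_eq_length_tensorProduct]
  exact length_le_add_of_exact _ _
    (lTensor_exact (C ⧸ 𝔞) (LinearMap.exact_map_mkQ_range f) (Submodule.mkQ_surjective _))

theorem quotLength_pi {ι : Type*} [Fintype ι] (X : ι → Type*) [∀ i, AddCommGroup (X i)]
    [∀ i, Module C (X i)] : quotLength 𝔞 (∀ i, X i) = ∑ i, quotLength 𝔞 (X i) := by
  classical
  simp only [quotLength_eq_length_tensorProduct]
  rw [(TensorProduct.piRight C C (C ⧸ 𝔞) X).length_eq, Module.length_pi_of_fintype]

theorem quotLength_quotient (𝔟 : Ideal C) :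
    quotLength 𝔞 (C ⧸ 𝔟) = Module.length C (C ⧸ (𝔟 ⊔ 𝔞)) := by
  have h : 𝔞 • (⊤ : Submodule C (C ⧸ 𝔟)) = Submodule.map (Submodule.mkQ 𝔟) 𝔞 := by
    rw [← Submodule.range_mkQ 𝔟, ← Submodule.map_top, ← Submodule.map_smul'', smul_eq_mul,
      Ideal.mul_top]
  exact ((Submodule.quotEquivOfEq _ _ h).trans
    (Submodule.quotientQuotientEquivQuotientSup 𝔟 𝔞)).length_eq

theorem quotLength_self : quotLength 𝔞 C = Module.length C (C ⧸ 𝔞) := by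
  rw [quotLength, smul_eq_mul, Ideal.mul_top]

end QuotLength

section PowerGenerators

variable {C : Type*} [CommRing C]

theorem length_quotient_sup_span_mul_le (𝔠 : Ideal C) (x y : C) :
    Module.length C (C ⧸ (𝔠 ⊔ Ideal.span {x * y})) ≤
      Module.length C (C ⧸ (𝔠 ⊔ Ideal.span {y})) +
        Module.length C (C ⧸ (𝔠 ⊔ Ideal.span {x})) := by
  have hxy : 𝔠 ⊔ Ideal.span {x * y} ≤ 𝔠 ⊔ Ideal.span {x} :=
    sup_le_sup_left (Ideal.span_singleton_le_span_singleton.2 (dvd_mul_right x y)) _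
  have hmul : 𝔠 ⊔ Ideal.span {y} ≤
      Submodule.comap (LinearMap.mulLeft C x) (𝔠 ⊔ Ideal.span {x * y}) := by
    refine sup_le (fun a ha => Submodule.mem_sup_left (𝔠.mul_mem_left x ha)) ?_
    rw [Ideal.span_le, Set.singleton_subset_iff]
    exact Submodule.mem_sup_right (Ideal.mem_span_singleton_self _)
  refine length_le_add_of_exact (Submodule.mapQ _ _ (LinearMap.mulLeft C x) hmul)
    (Submodule.factor hxy) fun z => ?_
  obtain ⟨z, rfl⟩ := Ideal.Quotient.mk_surjective z
  change Ideal.Quotient.mk _ z = 0 ↔ _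
  rw [Ideal.Quotient.eq_zero_iff_mem]
  constructor
  · intro hz
    obtain ⟨a, ha, b, hb, rfl⟩ := Submodule.mem_sup.1 hz
    obtain ⟨c, rfl⟩ := Ideal.mem_span_singleton.1 hb
    refine ⟨Ideal.Quotient.mk _ c, Ideal.Quotient.eq.2 ?_⟩
    rw [LinearMap.mulLeft_apply, sub_add_cancel_right]
    exact Submodule.mem_sup_left (neg_mem ha)
  · rintro ⟨c, hc⟩
    obtain ⟨c, rfl⟩ := Ideal.Quotient.mk_surjective c
    have hxc : x * c ∈ 𝔠 ⊔ Ideal.span {x} :=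
      Submodule.mem_sup_right (Ideal.mem_span_singleton.2 (dvd_mul_right x c))
    exact (Submodule.sub_mem_iff_right _ hxc).1 (hxy (Ideal.Quotient.eq.1 hc))

theorem length_quotient_sup_span_pow_le (𝔠 : Ideal C) (y : C) (q : ℕ) :
    Module.length C (C ⧸ (𝔠 ⊔ Ideal.span {y ^ q})) ≤
      q * Module.length C (C ⧸ (𝔠 ⊔ Ideal.span {y})) := by
  induction q with
  | zero =>
    have : Subsingleton (C ⧸ (𝔠 ⊔ Ideal.span {y ^ 0})) := by
      rw [Ideal.Quotient.subsingleton_iff, pow_zero, Ideal.span_singleton_one, sup_top_eq]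
    simp
  | succ q ih =>
    rw [pow_succ, Nat.cast_succ, add_mul, one_mul, add_comm]
    exact (length_quotient_sup_span_mul_le 𝔠 _ y).trans (add_le_add_right ih _)

theorem length_quotient_sup_span_image_pow_le (q : ℕ) (s : Finset C) (𝔠 : Ideal C) :
    Module.length C (C ⧸ (𝔠 ⊔ Ideal.span ((· ^ q) '' (s : Set C)))) ≤
      (q ^ s.card : ℕ) * Module.length C (C ⧸ (𝔠 ⊔ Ideal.span (s : Set C))) := by
  classical
  induction s using Finset.induction_on generalizing 𝔠 with
  | empty =>
    rw [Finset.coe_empty, Set.image_empty, Finset.card_empty, pow_zero, Nat.cast_one, one_mul]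
  | insert y s hy ih =>
    have hsup (z : C) (t : Set C) :
        𝔠 ⊔ Ideal.span (insert z t) = 𝔠 ⊔ Ideal.span {z} ⊔ Ideal.span t := by
      rw [Ideal.span_insert, sup_assoc]
    rw [Finset.coe_insert, Set.image_insert_eq, hsup, hsup, Finset.card_insert_of_notMem hy,
      sup_right_comm _ (Ideal.span {y})]
    calc
      _ ≤ (q ^ s.card : ℕ) * Module.length C
            (C ⧸ (𝔠 ⊔ Ideal.span {y ^ q} ⊔ Ideal.span (s : Set C))) := ih _
      _ ≤ (q ^ s.card : ℕ) * (q * Module.length C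
            (C ⧸ (𝔠 ⊔ Ideal.span (s : Set C) ⊔ Ideal.span {y}))) := by
        rw [sup_right_comm]
        gcongr
        exact length_quotient_sup_span_pow_le _ y q
      _ = _ := by rw [pow_succ, Nat.cast_mul, mul_assoc]

end PowerGenerators

section Dimension

variable {C : Type*} [CommRing C]

open Pointwise in
theorem ringKrullDim_quotient_span_singleton_succ_le {c : C} (hc : c ∈ ringCirc C) :
    ringKrullDim (C ⧸ Ideal.span {c}) + 1 ≤ ringKrullDim C := by
  have hmem : ∀ P ∈ (Module.annihilator C C).minimalPrimes, c ∉ P := by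
    rw [Module.annihilator_eq_bot.2 inferInstance]
    exact hc
  have hspan : c • (⊤ : Submodule C C) = Ideal.span {c} := by
    rw [← Submodule.ideal_span_singleton_smul, smul_eq_mul, Ideal.mul_top]
  have h : Module.supportDim C (C ⧸ c • (⊤ : Submodule C C)) + 1 ≤ Module.supportDim C C :=
    Module.supportDim_quotSMulTop_succ_le_of_notMem_minimalPrimes hmem
  rwa [hspan, Module.supportDim_quotient_eq_ringKrullDim,
    Module.supportDim_self_eq_ringKrullDim] at h

variable [IsLocalRing C]

theorem maximalIdeal_mem_minimalPrimes_iff {I : Ideal C} :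
    maximalIdeal C ∈ I.minimalPrimes ↔ I ≠ ⊤ ∧ maximalIdeal C ≤ I.radical := by
  constructor
  · intro h
    refine ⟨ne_top_of_le_ne_top h.1.1.ne_top h.1.2, ?_⟩
    rw [← Ideal.sInf_minimalPrimes]
    exact le_sInf fun Q hQ => h.2 ⟨hQ.1.1, hQ.1.2⟩ (le_maximalIdeal hQ.1.1.ne_top)
  · rintro ⟨hI, hrad⟩
    exact ⟨⟨inferInstance, le_maximalIdeal hI⟩,
      fun Q hQ _ => hrad.trans ((Ideal.IsPrime.radical_le_iff hQ.1).2 hQ.2)⟩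

variable [IsNoetherianRing C]

theorem length_quotient_ne_top_of_maximalIdeal_le_radical {I : Ideal C}
    (hI : maximalIdeal C ≤ I.radical) : Module.length C (C ⧸ I) ≠ ⊤ := by
  by_cases hI' : I = ⊤
  · have : Subsingleton (C ⧸ I) := Ideal.Quotient.subsingleton_iff.2 hI'
    simp
  · have := IsLocalRing.quotient_artinian_of_mem_minimalPrimes_of_isLocalRing I
      (maximalIdeal_mem_minimalPrimes_iff.2 ⟨hI', hI⟩)
    rw [Module.length_eq_of_surjective (S := C) (R := C ⧸ I) Ideal.Quotient.mk_surjective]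
    exact Module.length_ne_top

theorem exists_finset_card_le_maximalIdeal_le_radical {𝔟 : Ideal C} {t : ℕ}
    (ht : ringKrullDim (C ⧸ 𝔟) ≤ t) :
    ∃ s : Finset C, s.card ≤ t ∧ (s : Set C) ⊆ maximalIdeal C ∧
      maximalIdeal C ≤ (𝔟 ⊔ Ideal.span (s : Set C)).radical := by
  classical
  by_cases h𝔟 : 𝔟 = ⊤
  · refine ⟨∅, t.zero_le, by simp, ?_⟩
    rw [h𝔟, top_sup_eq, Ideal.radical_top]
    exact le_top
  have hnt : Nontrivial (C ⧸ 𝔟) := Ideal.Quotient.nontrivial_iff.2 h𝔟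
  have hlocal : IsLocalRing (C ⧸ 𝔟) :=
    .of_surjective' (Ideal.Quotient.mk 𝔟) Ideal.Quotient.mk_surjective
  have hmk : IsLocalHom (Ideal.Quotient.mk 𝔟) := .of_surjective _ Ideal.Quotient.mk_surjective
  have hcomap : (maximalIdeal (C ⧸ 𝔟)).comap (Ideal.Quotient.mk 𝔟) = maximalIdeal C :=
    ((local_hom_TFAE (Ideal.Quotient.mk 𝔟)).out 0 4).1 hmk
  obtain ⟨s, hs, hcard⟩ :=
    Ideal.exists_finset_card_eq_height_of_isNoetherianRing (maximalIdeal (C ⧸ 𝔟))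
  let g : C ⧸ 𝔟 → C := Function.surjInv Ideal.Quotient.mk_surjective
  have hg (x : C ⧸ 𝔟) : Ideal.Quotient.mk 𝔟 (g x) = x := Function.surjInv_eq _ x
  have hspan : (Ideal.span (s : Set (C ⧸ 𝔟))).comap (Ideal.Quotient.mk 𝔟) =
      𝔟 ⊔ Ideal.span (s.image g : Set C) := by
    have hmap : (Ideal.span (s.image g : Set C)).map (Ideal.Quotient.mk 𝔟) = Ideal.span s := by
      rw [Ideal.map_span, Finset.coe_image, Set.image_image]
      simp only [hg, Set.image_id']
    rw [← hmap, Ideal.comap_map_of_surjective _ Ideal.Quotient.mk_surjective,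
      ← RingHom.ker_eq_comap_bot, Ideal.mk_ker, sup_comm]
  refine ⟨s.image g, Finset.card_image_le.trans ?_, ?_, ?_⟩
  · rw [← IsLocalRing.maximalIdeal_height_eq_ringKrullDim, ← hcard] at ht
    exact_mod_cast ht
  · rw [← hcomap, Finset.coe_image]
    rintro _ ⟨x, hx, rfl⟩
    exact Ideal.mem_comap.2 (by rw [hg]; exact hs.1.2 (Ideal.subset_span hx))
  · rw [← hspan, ← Ideal.comap_radical, ← hcomap]
    exact Ideal.comap_mono (maximalIdeal_mem_minimalPrimes_iff.1 hs).2

theorem exists_finset_subset_card_le_maximalIdeal_le_radical {J 𝔟 : Ideal C}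
    (hJ : maximalIdeal C ≤ J.radical) {t : ℕ} (ht : ringKrullDim (C ⧸ 𝔟) ≤ t) :
    ∃ s : Finset C, s.card ≤ t ∧ (s : Set C) ⊆ J ∧
      maximalIdeal C ≤ (𝔟 ⊔ Ideal.span (s : Set C)).radical := by
  classical
  obtain ⟨s, hcard, hs, hrad⟩ := exists_finset_card_le_maximalIdeal_le_radical ht
  obtain ⟨n, hn⟩ := Ideal.exists_pow_le_of_le_radical_of_fg hJ (IsNoetherian.noetherian _)
  refine ⟨s.image (· ^ n), Finset.card_image_le.trans hcard, ?_, hrad.trans ?_⟩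
  · rw [Finset.coe_image]
    rintro _ ⟨x, hx, rfl⟩
    exact hn (Ideal.pow_mem_pow (hs hx) n)
  · refine Ideal.radical_le_radical_iff.2 (sup_le (le_sup_left.trans Ideal.le_radical) ?_)
    refine Ideal.span_le.2 fun x hx => ⟨n, Submodule.mem_sup_right (Ideal.subset_span ?_)⟩
    exact Finset.mem_coe.2 (Finset.mem_image_of_mem _ hx)

end Dimension

section Growth

variable {C : Type*} [CommRing C]

theorem pow_mem_bracketPow {J : Ideal C} {y : C} (hy : y ∈ J) (q : ℕ) : y ^ q ∈ J.bracketPow q :=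
  Ideal.subset_span ⟨y, hy, rfl⟩

theorem le_radical_bracketPow (J : Ideal C) (q : ℕ) : J ≤ (J.bracketPow q).radical :=
  fun _ hy => ⟨q, pow_mem_bracketPow hy q⟩

variable [IsLocalRing C] [IsNoetherianRing C] {J : Ideal C} (hJ : maximalIdeal C ≤ J.radical)
  {M : Type*} [AddCommGroup M] [Module C M] [Module.Finite C M]

include hJ

theorem quotLength_bracketPow_ne_top (q : ℕ) (M : Type*) [AddCommGroup M] [Module C M]
    [Module.Finite C M] : quotLength (J.bracketPow q) M ≠ ⊤ := by
  obtain ⟨n, f, hf⟩ := Module.Finite.exists_fin' C M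
  refine ne_top_of_le_ne_top ?_ (quotLength_le_of_surjective _ f hf)
  rw [quotLength_pi, Finset.sum_const, nsmul_eq_mul, quotLength_self]
  exact WithTop.mul_ne_top (ENat.natCast_ne_top _)
    (length_quotient_ne_top_of_maximalIdeal_le_radical
      (hJ.trans (Ideal.radical_le_radical_iff.2 (le_radical_bracketPow J q))))

theorem exists_quotLength_quotient_bracketPow_le {𝔟 : Ideal C} {t : ℕ}
    (ht : ringKrullDim (C ⧸ 𝔟) ≤ t) :
    ∃ K : ℕ, ∀ q : ℕ, 0 < q → quotLength (J.bracketPow q) (C ⧸ 𝔟) ≤ (K * q ^ t : ℕ) := by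
  obtain ⟨s, hcard, hsJ, hrad⟩ := exists_finset_subset_card_le_maximalIdeal_le_radical hJ ht
  obtain ⟨K, hK⟩ := ENat.ne_top_iff_exists.1
    (length_quotient_ne_top_of_maximalIdeal_le_radical hrad)
  refine ⟨K, fun q hq => ?_⟩
  have hle : 𝔟 ⊔ Ideal.span ((· ^ q) '' (s : Set C)) ≤ 𝔟 ⊔ J.bracketPow q :=
    sup_le_sup_left (Ideal.span_mono (Set.image_mono hsJ)) _
  calc
    quotLength (J.bracketPow q) (C ⧸ 𝔟) = Module.length C (C ⧸ (𝔟 ⊔ J.bracketPow q)) :=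
      quotLength_quotient _ _
    _ ≤ Module.length C (C ⧸ (𝔟 ⊔ Ideal.span ((· ^ q) '' (s : Set C)))) :=
      Module.length_le_of_surjective _ (Submodule.factor_surjective hle)
    _ ≤ (q ^ s.card : ℕ) * K := hK ▸ length_quotient_sup_span_image_pow_le q s 𝔟
    _ ≤ (K * q ^ t : ℕ) := by
      rw [mul_comm K, Nat.cast_mul]
      gcongr

theorem exists_quotLength_bracketPow_le {𝔟 : Ideal C} {t : ℕ} (ht : ringKrullDim (C ⧸ 𝔟) ≤ t)
    (hM : 𝔟 ≤ Module.annihilator C M) :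
    ∃ K : ℕ, ∀ q : ℕ, 0 < q → quotLength (J.bracketPow q) M ≤ (K * q ^ t : ℕ) := by
  have htors : Module.IsTorsionBySet C M 𝔟 := fun x b => Module.mem_annihilator.1 (hM b.2) x
  let := htors.module
  have := htors.isScalarTower (S := C)
  have := Module.Finite.of_restrictScalars_finite C (C ⧸ 𝔟) M
  obtain ⟨n, f, hf⟩ := Module.Finite.exists_fin' (C ⧸ 𝔟) M
  obtain ⟨K, hK⟩ := exists_quotLength_quotient_bracketPow_le hJ ht
  refine ⟨n * K, fun q hq => ?_⟩
  calc
    quotLength (J.bracketPow q) M ≤ quotLength (J.bracketPow q) (Fin n → C ⧸ 𝔟) :=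
      quotLength_le_of_surjective _ (f.restrictScalars C) hf
    _ = n * quotLength (J.bracketPow q) (C ⧸ 𝔟) := by
      rw [quotLength_pi, Finset.sum_const, nsmul_eq_mul, Finset.card_univ, Fintype.card_fin]
    _ ≤ n * (K * q ^ t : ℕ) := by gcongr; exact hK q hq
    _ = (n * K * q ^ t : ℕ) := by rw [mul_assoc, Nat.cast_mul n]

end Growth

section Ratio

variable {C : Type*} [CommRing C]

/-- The normalised Hilbert–Kunz function `e ↦ ℓ(M / J^{[p^e]}M) / p^{ed}` of a module `M`. An
infinite length contributes the junk value `0`. -/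
noncomputable def hilbertKunzRatio (J : Ideal C) (p d : ℕ) (M : Type*) [AddCommGroup M]
    [Module C M] (e : ℕ) : ℝ :=
  ((quotLength (J.bracketPow (p ^ e)) M).toNat : ℝ) / (p : ℝ) ^ (e * d)

theorem hilbertKunzRatio_nonneg (J : Ideal C) (p d : ℕ) (M : Type*) [AddCommGroup M] [Module C M]
    (e : ℕ) : 0 ≤ hilbertKunzRatio J p d M e := by
  unfold hilbertKunzRatio
  positivity

theorem summable_of_isBigO_inv_pow {p : ℕ} [Fact p.Prime] {u : ℕ → ℝ}
    (hu : u =O[atTop] fun e => ((p : ℝ) ^ e)⁻¹) : Summable u := by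
  refine summable_of_isBigO_nat ?_ hu
  simp_rw [← inv_pow]
  exact summable_geometric_of_lt_one (by positivity)
    (inv_lt_one_of_one_lt₀ (by exact_mod_cast (Fact.out : p.Prime).one_lt))

variable {M N : Type*} [AddCommGroup M] [Module C M] [AddCommGroup N] [Module C N]

theorem mem_annihilator_coker_of_comp_eq_smul_id {f : M →ₗ[C] N} {g : N →ₗ[C] M} {c : C}
    (h : f ∘ₗ g = c • LinearMap.id) : c ∈ Module.annihilator C (N ⧸ LinearMap.range f) := by
  refine Module.mem_annihilator.2 fun x => ?_
  obtain ⟨n, rfl⟩ := Submodule.mkQ_surjective _ x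
  rw [← map_smul, Submodule.mkQ_apply, Submodule.Quotient.mk_eq_zero]
  exact ⟨g n, LinearMap.congr_fun h n⟩

variable [IsLocalRing C] [IsNoetherianRing C] {J : Ideal C} (hJ : maximalIdeal C ≤ J.radical)
  [Module.Finite C M] [Module.Finite C N] (p : ℕ) {d : ℕ}

include hJ

theorem hilbertKunzRatio_le_add_coker (e : ℕ) (f : M →ₗ[C] N) :
    hilbertKunzRatio J p d N e ≤
      hilbertKunzRatio J p d M e + hilbertKunzRatio J p d (N ⧸ LinearMap.range f) e := by
  have hM := quotLength_bracketPow_ne_top hJ (p ^ e) M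
  have hQ := quotLength_bracketPow_ne_top hJ (p ^ e) (N ⧸ LinearMap.range f)
  have h := ENat.toNat_le_toNat (quotLength_le_add_quotLength_coker (J.bracketPow (p ^ e)) f)
    (WithTop.add_ne_top.2 ⟨hM, hQ⟩)
  rw [ENat.toNat_add hM hQ] at h
  unfold hilbertKunzRatio
  rw [← add_div]
  gcongr
  exact_mod_cast h

theorem hilbertKunzRatio_pi (e : ℕ) {ι : Type*} [Fintype ι] (X : ι → Type*)
    [∀ i, AddCommGroup (X i)] [∀ i, Module C (X i)] [∀ i, Module.Finite C (X i)] :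
    hilbertKunzRatio J p d (∀ i, X i) e = ∑ i, hilbertKunzRatio J p d (X i) e := by
  unfold hilbertKunzRatio
  rw [quotLength_pi, ← Finset.sum_div,
    ENat.toNat_sum fun i _ => quotLength_bracketPow_ne_top hJ _ (X i), Nat.cast_sum]

variable [hp : Fact p.Prime]

theorem exists_hilbertKunzRatio_le_mul_pow {𝔟 : Ideal C} {t : ℕ} (ht : ringKrullDim (C ⧸ 𝔟) ≤ t)
    (hM : 𝔟 ≤ Module.annihilator C M) :
    ∃ K : ℝ, ∀ e, hilbertKunzRatio J p d M e ≤ K * (p ^ (e * t) / p ^ (e * d)) := by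
  obtain ⟨K, hK⟩ := exists_quotLength_bracketPow_le hJ ht hM
  refine ⟨K, fun e => ?_⟩
  have h := ENat.toNat_le_of_le_natCast (hK (p ^ e) (pow_pos hp.out.pos e))
  rw [hilbertKunzRatio, ← mul_div_assoc, pow_mul _ e t]
  gcongr
  exact_mod_cast h

theorem bddAbove_range_hilbertKunzRatio (hd : ringKrullDim C ≤ d) (M : Type*) [AddCommGroup M]
    [Module C M] [Module.Finite C M] : BddAbove (Set.range (hilbertKunzRatio J p d M)) := by
  obtain ⟨K, hK⟩ := exists_hilbertKunzRatio_le_mul_pow (M := M) (d := d) hJ p (𝔟 := ⊥)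
    ((ringKrullDim_quotient_le _).trans hd) bot_le
  refine ⟨K, Set.forall_mem_range.2 fun e => (hK e).trans_eq ?_⟩
  rw [div_self (pow_ne_zero _ (Nat.cast_ne_zero.2 hp.out.ne_zero)), mul_one]

theorem isBigO_hilbertKunzRatio_of_mem_annihilator (hd : ringKrullDim C ≤ d) {c : C}
    (hc : c ∈ ringCirc C) (hcM : c ∈ Module.annihilator C M) :
    hilbertKunzRatio J p d M =O[atTop] fun e => ((p : ℝ) ^ e)⁻¹ := by
  have hcM' : Ideal.span {c} ≤ Module.annihilator C M := (Ideal.span_singleton_le_iff_mem _).2 hcM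
  have hdim := (ringKrullDim_quotient_span_singleton_succ_le hc).trans hd
  obtain _ | t := d
  · have hspan : Ideal.span {c} = ⊤ := by
      by_contra hne
      have : Nontrivial (C ⧸ Ideal.span {c}) := Ideal.Quotient.nontrivial_iff.2 hne
      have h := (add_le_add_left (ringKrullDim_nonneg_of_nontrivial (R := C ⧸ Ideal.span {c})) 1)
      exact absurd (h.trans hdim) (by norm_num)
    have : Subsingleton M := Module.annihilator_eq_top_iff.1 (top_le_iff.1 (hspan ▸ hcM'))
    have hzero : hilbertKunzRatio J p 0 M = 0 := by
      ext e
      simp [hilbertKunzRatio, quotLength]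
    exact hzero ▸ Asymptotics.isBigO_zero _ _
  · have ht : ringKrullDim (C ⧸ Ideal.span {c}) ≤ t := by
      rw [Nat.cast_add, Nat.cast_one] at hdim
      exact ENat.WithBot.add_le_add_one_right_iff.1 hdim
    obtain ⟨K, hK⟩ := exists_hilbertKunzRatio_le_mul_pow (d := t + 1) hJ p ht hcM'
    refine Asymptotics.IsBigO.of_bound K (.of_forall fun e => ?_)
    have hratio : (p : ℝ) ^ (e * t) / p ^ (e * (t + 1)) = ((p : ℝ) ^ e)⁻¹ := by
      have hp₀ : (p : ℝ) ≠ 0 := Nat.cast_ne_zero.2 hp.out.ne_zero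
      rw [mul_add, mul_one, pow_add]
      field_simp
    rw [Real.norm_of_nonneg (hilbertKunzRatio_nonneg ..), Real.norm_of_nonneg (by positivity),
      ← hratio]
    exact hK e

theorem isBigO_hilbertKunzRatio_sub_of_comp_eq_smul_id (hd : ringKrullDim C ≤ d) {c : C}
    (hc : c ∈ ringCirc C) {f : M →ₗ[C] N} {g : N →ₗ[C] M} (hfg : f ∘ₗ g = c • LinearMap.id)
    (hgf : g ∘ₗ f = c • LinearMap.id) :
    (fun e => hilbertKunzRatio J p d M e - hilbertKunzRatio J p d N e) =O[atTop]
      fun e => ((p : ℝ) ^ e)⁻¹ := by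
  have hf := isBigO_hilbertKunzRatio_of_mem_annihilator hJ p hd hc
    (mem_annihilator_coker_of_comp_eq_smul_id hfg)
  have hg := isBigO_hilbertKunzRatio_of_mem_annihilator hJ p hd hc
    (mem_annihilator_coker_of_comp_eq_smul_id hgf)
  refine .trans (.of_norm_le fun e => ?_) (hf.add hg)
  have hNM := hilbertKunzRatio_le_add_coker (d := d) hJ p e f
  have hMN := hilbertKunzRatio_le_add_coker (d := d) hJ p e g
  have hf₀ := hilbertKunzRatio_nonneg J p d (N ⧸ LinearMap.range f) e
  have hg₀ := hilbertKunzRatio_nonneg J p d (M ⧸ LinearMap.range g) e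
  rw [Real.norm_eq_abs, abs_le]
  constructor <;> linarith

end Ratio

section Pushforward

variable {A B : Type*} [CommRing A] [CommRing B]

/-- The `A`-module `φ_* X` obtained from a `B`-module `X` by restricting scalars along
`φ : A →+* B`. It is a type synonym because for an endomorphism `φ` of `A` the `A`-module
structures of `X` and `φ_* X` differ. -/
def Pushforward (_φ : A →+* B) (X : Type*) : Type _ := X

variable (φ : A →+* B) (X : Type*) [AddCommGroup X] [Module B X]

instance : AddCommGroup (Pushforward φ X) := inferInstanceAs (AddCommGroup X)

instance : Module A (Pushforward φ X) := Module.compHom X φ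

theorem annihilator_pushforward :
    Module.annihilator A (Pushforward φ X) = (Module.annihilator B X).comap φ := by
  ext a
  rw [Ideal.mem_comap, Module.mem_annihilator, Module.mem_annihilator]
  rfl

theorem finite_pushforward (hφ : φ.Finite) [Module.Finite B X] :
    Module.Finite A (Pushforward φ X) := by
  let := φ.toAlgebra
  let : Module B (Pushforward φ X) := inferInstanceAs (Module B X)
  have : IsScalarTower A B (Pushforward φ X) := ⟨fun a b x => mul_smul (φ a) b (x : X)⟩
  have : Module.Finite B (Pushforward φ X) := inferInstanceAs (Module.Finite B X)
  have : Module.Finite A B := hφ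
  exact Module.Finite.trans B (Pushforward φ X)

theorem quotLength_pushforward [IsLocalRing A] [IsLocalRing B] [hφ : IsLocalHom φ]
    (hsurj : Function.Surjective (ResidueField.map φ)) (𝔞 : Ideal A) :
    quotLength 𝔞 (Pushforward φ X) = quotLength (𝔞.map φ) X := by
  let := φ.toAlgebra
  let : Module B (Pushforward φ X) := inferInstanceAs (Module B X)
  have : IsScalarTower A B (Pushforward φ X) := ⟨fun a b x => mul_smul (φ a) b (x : X)⟩
  have : IsLocalHom (algebraMap A B) := hφ
  have hlength : Module.length (ResidueField A) (ResidueField B) = 1 :=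
    (Module.length_eq_of_surjective hsurj).trans (Module.length_eq_one _ _)
  have hsmul : 𝔞 • (⊤ : Submodule A (Pushforward φ X)) =
      (𝔞.map φ • (⊤ : Submodule B (Pushforward φ X))).restrictScalars A := by
    change _ = (𝔞.map (algebraMap A B) • (⊤ : Submodule B (Pushforward φ X))).restrictScalars A
    rw [Ideal.smul_restrictScalars, Submodule.restrictScalars_top]
  calc
    quotLength 𝔞 (Pushforward φ X) = Module.length A
        (Pushforward φ X ⧸ 𝔞.map φ • (⊤ : Submodule B (Pushforward φ X))) :=
      ((Submodule.quotEquivOfEq _ _ hsmul).trans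
        (Submodule.Quotient.restrictScalarsEquiv A _)).length_eq
    _ = quotLength (𝔞.map φ) X := by
      rw [IsLocalRing.length_restrictScalars A B, hlength, mul_one]
      rfl

end Pushforward

section Frobenius

variable {C : Type*} [CommRing C] (p : ℕ) [hp : Fact p.Prime] [CharP C p]

theorem iterateFrobenius_finite (hF : (frobenius C p).Finite) (k : ℕ) :
    (iterateFrobenius C p k).Finite := by
  induction k with
  | zero => exact iterateFrobenius_zero C p ▸ RingHom.Finite.id C
  | succ k ih =>
    rw [iterateFrobenius_add, iterateFrobenius_one]
    exact ih.comp hF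

theorem bracketPow_pow_eq_map_iterateFrobenius (J : Ideal C) (e : ℕ) :
    J.bracketPow (p ^ e) = J.map (iterateFrobenius C p e) :=
  rfl

theorem map_bracketPow_pow {B : Type*} [CommRing B] [CharP B p] (f : C →+* B) (J : Ideal C)
    (e : ℕ) : (J.bracketPow (p ^ e)).map f = (J.map f).bracketPow (p ^ e) := by
  rw [bracketPow_pow_eq_map_iterateFrobenius, bracketPow_pow_eq_map_iterateFrobenius,
    Ideal.map_map, Ideal.map_map, RingHom.iterateFrobenius_comm]

variable [IsLocalRing C]

instance isLocalHom_iterateFrobenius (k : ℕ) : IsLocalHom (iterateFrobenius C p k) :=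
  ⟨fun _ ha => (isUnit_pow_iff (pow_ne_zero k hp.out.ne_zero)).1 ha⟩

theorem residueFieldMap_iterateFrobenius_surjective
    (hperf : ∀ x : ResidueField C, ∃ y, y ^ p = x) (k : ℕ) :
    Function.Surjective (ResidueField.map (iterateFrobenius C p k)) := by
  have hroot : Function.Surjective fun y : ResidueField C => y ^ p ^ k :=
    pow_iterate (M := ResidueField C) p k ▸ Function.Surjective.iterate hperf k
  intro x
  obtain ⟨y, rfl⟩ := hroot x
  obtain ⟨y, rfl⟩ := residue_surjective y
  exact ⟨residue C y, (ResidueField.map_residue _ _).trans (map_pow _ _ _)⟩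

theorem hilbertKunzRatio_pushforward (hperf : ∀ x : ResidueField C, ∃ y, y ^ p = x) (J : Ideal C)
    (d k : ℕ) (X : Type*) [AddCommGroup X] [Module C X] (e : ℕ) :
    hilbertKunzRatio J p d (Pushforward (iterateFrobenius C p k) X) e =
      (p : ℝ) ^ (k * d) * hilbertKunzRatio J p d X (e + k) := by
  have hmap : (J.bracketPow (p ^ e)).map (iterateFrobenius C p k) = J.bracketPow (p ^ (e + k)) := by
    rw [bracketPow_pow_eq_map_iterateFrobenius, bracketPow_pow_eq_map_iterateFrobenius,
      Ideal.map_map, add_comm, iterateFrobenius_add]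
  have hp₀ : (p : ℝ) ≠ 0 := Nat.cast_ne_zero.2 hp.out.ne_zero
  unfold hilbertKunzRatio
  rw [quotLength_pushforward _ _ (residueFieldMap_iterateFrobenius_surjective p hperf k), hmap,
    add_mul, pow_add _ (e * d)]
  field_simp

end Frobenius

section GenericFreeness

variable (D M : Type*) [CommRing D] [IsDomain D] [AddCommGroup M] [Module D M] [Module.Finite D M]

theorem exists_linearIndependent_smul_mem_span :
    ∃ (v : Fin (Module.finrank D M) → M) (c : D), LinearIndependent D v ∧ c ≠ 0 ∧
      ∀ m, c • m ∈ Submodule.span D (Set.range v) := by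
  obtain ⟨v, hv⟩ := exists_linearIndependent_of_le_finrank (R := D) (M := M) le_rfl
  have hrank : Module.rank D (M ⧸ Submodule.span D (Set.range v)) = 0 := by
    have h := Submodule.finrank_quotient_add_finrank (Submodule.span D (Set.range v))
    rw [finrank_span_eq_card hv, Fintype.card_fin, Nat.add_eq_right] at h
    rw [← Module.finrank_eq_rank, h, Nat.cast_zero]
  obtain ⟨c, hc, hc₀⟩ := Submodule.annihilator_top_inter_nonZeroDivisors
    (Module.rank_eq_zero_iff_isTorsion.1 hrank)
  refine ⟨v, c, hv, nonZeroDivisors.ne_zero hc₀, fun m => ?_⟩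
  rw [← Submodule.Quotient.mk_eq_zero, Submodule.Quotient.mk_smul]
  exact Submodule.mem_annihilator.1 hc _ trivial

theorem exists_free_comp_eq_smul_id :
    ∃ (n : ℕ) (f : (Fin n → D) →ₗ[D] M) (g : M →ₗ[D] Fin n → D) (c : D), c ≠ 0 ∧
      f ∘ₗ g = c • LinearMap.id ∧ g ∘ₗ f = c • LinearMap.id := by
  obtain ⟨v, c, hv, hc, hspan⟩ := exists_linearIndependent_smul_mem_span D M
  let f : (Fin (Module.finrank D M) → D) →ₗ[D] M := Fintype.linearCombination D v
  have hf : Function.Injective f := hv.fintypeLinearCombination_injective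
  have hfrange (m : M) : c • m ∈ LinearMap.range f := by
    rw [Fintype.range_linearCombination]
    exact hspan m
  let g : M →ₗ[D] Fin (Module.finrank D M) → D := (LinearEquiv.ofInjective f hf).symm ∘ₗ
    (LinearMap.lsmul D M c).codRestrict (LinearMap.range f) hfrange
  have hfg : f ∘ₗ g = c • LinearMap.id := by
    ext m
    exact congrArg Subtype.val ((LinearEquiv.ofInjective f hf).apply_symm_apply ⟨c • m, hfrange m⟩)
  refine ⟨_, f, g, c, hc, hfg, LinearMap.ext fun y => hf ?_⟩
  rw [LinearMap.comp_apply, ← LinearMap.comp_apply f g, hfg, LinearMap.smul_apply,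
    LinearMap.smul_apply, map_smul, LinearMap.id_apply, LinearMap.id_apply]

end GenericFreeness

section SeparatingFamily

variable {C : Type*} [CommRing C]

/-- A family of elements `c P`, indexed by the minimal primes, that vanish at every minimal prime
except at `P` itself. It plays the role of a partition of unity at the generic points. -/
def IsSeparatingFamily (c : minimalPrimes C → C) : Prop :=
  ∀ P Q : minimalPrimes C, c P ∈ Q.1 ↔ P ≠ Q

theorem IsSeparatingFamily.mul_mem_nilradical {c : minimalPrimes C → C} (hc : IsSeparatingFamily c)
    {P : minimalPrimes C} {a : C} (ha : a ∈ P.1) : c P * a ∈ nilradical C := by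
  rw [nilradical, Ideal.zero_eq_bot, ← Ideal.sInf_minimalPrimes, Submodule.mem_sInf]
  intro Q hQ
  obtain rfl | h := eq_or_ne P ⟨Q, hQ⟩
  · exact Ideal.mul_mem_left Q _ ha
  · exact Ideal.mul_mem_right _ Q ((hc P ⟨Q, hQ⟩).2 h)

theorem exists_isSeparatingFamily (C : Type*) [CommRing C] [Finite (minimalPrimes C)] :
    ∃ c : minimalPrimes C → C, IsSeparatingFamily c := by
  classical
  have := Fintype.ofFinite (minimalPrimes C)
  have hex (P : minimalPrimes C) : ∃ c : C, c ∉ P.1 ∧ ∀ Q : minimalPrimes C, P ≠ Q → c ∈ Q.1 := by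
    have hP : ¬ ((Finset.univ.erase P).inf fun Q : minimalPrimes C => Q.1) ≤ P.1 := by
      intro hle
      obtain ⟨Q, hQ, hQP⟩ := (Ideal.IsPrime.inf_le' P.2.1.1).1 hle
      exact Finset.ne_of_mem_erase hQ
        (Subtype.ext (le_antisymm hQP (P.2.2 ⟨Q.2.1.1, bot_le⟩ hQP)))
    obtain ⟨c, hc, hcP⟩ := SetLike.not_le_iff_exists.1 hP
    exact ⟨c, hcP, fun Q hQ =>
      Finset.inf_le (f := fun Q : minimalPrimes C => Q.1)
        (Finset.mem_erase.2 ⟨hQ.symm, Finset.mem_univ Q⟩) hc⟩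
  choose c hcP hcQ using hex
  exact ⟨c, fun P Q => ⟨fun h hPQ => hcP P (hPQ ▸ h), hcQ P Q⟩⟩

variable [Fintype (minimalPrimes C)] {c : minimalPrimes C → C} (hc : IsSeparatingFamily c)

include hc

theorem IsSeparatingFamily.sum_sub_mem (Q : minimalPrimes C) : ∑ P, c P - c Q ∈ Q.1 := by
  classical
  rw [← Finset.sum_erase_add _ _ (Finset.mem_univ Q), add_sub_cancel_right]
  exact Ideal.sum_mem _ fun P hP => (hc P Q).2 (Finset.ne_of_mem_erase hP)

theorem IsSeparatingFamily.sum_mem_ringCirc : ∑ P, c P ∈ ringCirc C := fun Q hQ hsum =>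
  (hc ⟨Q, hQ⟩ ⟨Q, hQ⟩).1 ((Submodule.sub_mem_iff_right _ hsum).1 (hc.sum_sub_mem ⟨Q, hQ⟩)) rfl

end SeparatingFamily

theorem exists_mem_ringCirc_sub_mul_mem {C : Type*} [CommRing C] [Finite (minimalPrimes C)]
    {P : Ideal C} (hP : P ∈ minimalPrimes C) {a : C} (ha : a ∉ P) :
    ∃ b ∈ ringCirc C, ∃ r, b - r * a ∈ P := by
  classical
  have := Fintype.ofFinite (minimalPrimes C)
  obtain ⟨c, hc⟩ := exists_isSeparatingFamily C
  let P' : minimalPrimes C := ⟨P, hP⟩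
  have hc' : IsSeparatingFamily (Function.update c P' (c P' * a)) := by
    intro Q R
    have := R.2.1.1
    obtain rfl | hQ := eq_or_ne Q P'
    · rw [Function.update_self, Ideal.IsPrime.mul_mem_iff_mem_or_mem ‹_›, hc]
      exact ⟨fun h hR => h.elim (· hR) (hR ▸ ha), Or.inl⟩
    · rw [Function.update_of_ne hQ, hc]
  refine ⟨_, hc'.sum_mem_ringCirc, c P', ?_⟩
  have h := hc'.sum_sub_mem P'
  rwa [Function.update_self] at h

section GenericDecomposition

variable {C : Type*} [CommRing C] [Finite (minimalPrimes C)]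
  (N : Type*) [AddCommGroup N] [Module C N]

theorem exists_comp_eq_smul_id_of_nilradical_le_annihilator
    (hN : nilradical C ≤ Module.annihilator C N) :
    ∃ (F : N →ₗ[C] ∀ P : minimalPrimes C, N ⧸ P.1 • (⊤ : Submodule C N))
      (G : (∀ P : minimalPrimes C, N ⧸ P.1 • (⊤ : Submodule C N)) →ₗ[C] N),
      ∃ b ∈ ringCirc C, F ∘ₗ G = b • LinearMap.id ∧ G ∘ₗ F = b • LinearMap.id := by
  classical
  have := Fintype.ofFinite (minimalPrimes C)
  obtain ⟨c, hc⟩ := exists_isSeparatingFamily C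
  have hker (P : minimalPrimes C) :
      P.1 • (⊤ : Submodule C N) ≤ LinearMap.ker (LinearMap.lsmul C N (c P)) := by
    refine Submodule.smul_le.2 fun a ha n _ => ?_
    rw [LinearMap.mem_ker, LinearMap.lsmul_apply, ← mul_smul]
    exact Module.mem_annihilator.1 (hN (hc.mul_mem_nilradical ha)) n
  let F : N →ₗ[C] ∀ P : minimalPrimes C, N ⧸ P.1 • (⊤ : Submodule C N) :=
    LinearMap.pi fun P => Submodule.mkQ _
  let G : (∀ P : minimalPrimes C, N ⧸ P.1 • (⊤ : Submodule C N)) →ₗ[C] N :=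
    ∑ P, Submodule.liftQ _ _ (hker P) ∘ₗ LinearMap.proj P
  have hG (n : minimalPrimes C → N) :
      G (fun P => Submodule.Quotient.mk (n P)) = ∑ P, c P • n P := by
    simp only [G, LinearMap.sum_apply, LinearMap.comp_apply, LinearMap.proj_apply,
      Submodule.liftQ_apply, LinearMap.lsmul_apply]
  refine ⟨F, G, _, hc.sum_mem_ringCirc, LinearMap.ext fun y => funext fun Q => ?_,
    LinearMap.ext fun n => ?_⟩
  · choose n hn using fun P => Submodule.Quotient.mk_surjective _ (y P)
    obtain rfl : (fun P => Submodule.Quotient.mk (n P)) = y := funext hn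
    change (Submodule.Quotient.mk (G _) : N ⧸ Q.1 • (⊤ : Submodule C N)) =
      (∑ P, c P) • Submodule.Quotient.mk (n Q)
    rw [hG, ← Submodule.Quotient.mk_smul, Submodule.Quotient.eq, Finset.sum_smul,
      ← Finset.sum_sub_distrib]
    refine Submodule.sum_mem _ fun P _ => ?_
    obtain rfl | hPQ := eq_or_ne P Q
    · simp
    · rw [← smul_sub]
      exact Submodule.smul_mem_smul ((hc P Q).2 hPQ) trivial
  · change G (fun P => Submodule.Quotient.mk n) = (∑ P, c P) • n
    rw [hG, Finset.sum_smul]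

end GenericDecomposition

section Convergence

variable {C : Type*} [CommRing C] [IsLocalRing C] [IsNoetherianRing C] {J : Ideal C}
  (hJ : maximalIdeal C ≤ J.radical) (p : ℕ) [hp : Fact p.Prime] {d : ℕ} (hd : ringKrullDim C ≤ d)

include hJ hd

theorem exists_isBigO_hilbertKunzRatio_sub_mul {P : Ideal C} (hP : P ∈ minimalPrimes C)
    {M : Type*} [AddCommGroup M] [Module C M] [Module.Finite C M]
    (hM : P ≤ Module.annihilator C M) :
    ∃ r : ℝ, (fun e => hilbertKunzRatio J p d M e - r * hilbertKunzRatio J p d (C ⧸ P) e)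
      =O[atTop] fun e => ((p : ℝ) ^ e)⁻¹ := by
  have := hP.1.1
  have : Finite (minimalPrimes C) := (minimalPrimes.finite_of_isNoetherianRing C).to_subtype
  have htors : Module.IsTorsionBySet C M P := fun x b => Module.mem_annihilator.1 (hM b.2) x
  let := htors.module
  have := htors.isScalarTower (S := C)
  have := Module.Finite.of_restrictScalars_finite C (C ⧸ P) M
  obtain ⟨n, f, g, c, hc, hfg, hgf⟩ := exists_free_comp_eq_smul_id (C ⧸ P) M
  obtain ⟨c, rfl⟩ := Ideal.Quotient.mk_surjective c
  obtain ⟨b, hb, r, hbr⟩ :=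
    exists_mem_ringCirc_sub_mul_mem hP (mt Ideal.Quotient.eq_zero_iff_mem.2 hc)
  have hbr' : algebraMap C (C ⧸ P) b = Ideal.Quotient.mk P r * Ideal.Quotient.mk P c := by
    rw [← map_mul]
    exact Ideal.Quotient.eq.2 hbr
  refine ⟨n, ?_⟩
  have hn (e : ℕ) : (n : ℝ) * hilbertKunzRatio J p d (C ⧸ P) e =
      hilbertKunzRatio J p d (Fin n → C ⧸ P) e := by
    rw [hilbertKunzRatio_pi hJ, Finset.sum_const, nsmul_eq_mul, Finset.card_univ, Fintype.card_fin]
  simp only [hn]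
  refine isBigO_hilbertKunzRatio_sub_of_comp_eq_smul_id hJ p hd hb
    (f := (Ideal.Quotient.mk P r • g).restrictScalars C) (g := f.restrictScalars C) ?_ ?_
  · refine LinearMap.ext fun y => ?_
    change Ideal.Quotient.mk P r • (g ∘ₗ f) y = b • y
    rw [hgf, ← algebraMap_smul (C ⧸ P) b y, hbr', mul_smul]
    rfl
  · refine LinearMap.ext fun m => ?_
    change f (Ideal.Quotient.mk P r • g m) = b • m
    rw [map_smul, ← LinearMap.comp_apply, hfg, ← algebraMap_smul (C ⧸ P) b m, hbr', mul_smul]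
    rfl

theorem exists_isBigO_hilbertKunzRatio_sub_sum [Fintype (minimalPrimes C)] {N : Type*}
    [AddCommGroup N] [Module C N] [Module.Finite C N] (hN : nilradical C ≤ Module.annihilator C N) :
    ∃ r : minimalPrimes C → ℝ,
      (fun e => hilbertKunzRatio J p d N e - ∑ P, r P * hilbertKunzRatio J p d (C ⧸ P.1) e)
        =O[atTop] fun e => ((p : ℝ) ^ e)⁻¹ := by
  have hM (P : minimalPrimes C) :
      P.1 ≤ Module.annihilator C (N ⧸ P.1 • (⊤ : Submodule C N)) := fun a ha =>
    Module.mem_annihilator.2 <| (Submodule.Quotient.mk_surjective _).forall.2 fun n =>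
      (Submodule.Quotient.mk_eq_zero _).2 (Submodule.smul_mem_smul ha trivial)
  choose r hr using fun P : minimalPrimes C =>
    exists_isBigO_hilbertKunzRatio_sub_mul hJ p hd P.2 (hM P)
  obtain ⟨F, G, b, hb, hFG, hGF⟩ := exists_comp_eq_smul_id_of_nilradical_le_annihilator N hN
  refine ⟨r, ((isBigO_hilbertKunzRatio_sub_of_comp_eq_smul_id hJ p hd hb hFG hGF).add
    (Asymptotics.IsBigO.sum (s := Finset.univ) fun P _ => hr P)).congr_left fun e => ?_⟩
  rw [hilbertKunzRatio_pi hJ, Finset.sum_apply, Finset.sum_sub_distrib, sub_add_sub_cancel]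

variable [CharP C p] (hperf : ∀ x : ResidueField C, ∃ y, y ^ p = x) (hF : (frobenius C p).Finite)

include hperf hF

theorem exists_tendsto_hilbertKunzRatio_of_mem_minimalPrimes {P : Ideal C}
    (hP : P ∈ minimalPrimes C) : ∃ L, Tendsto (hilbertKunzRatio J p d (C ⧸ P)) atTop (𝓝 L) := by
  have hfin := finite_pushforward _ (C ⧸ P) (iterateFrobenius_finite p hF 1)
  have hann : P ≤ Module.annihilator C (Pushforward (iterateFrobenius C p 1) (C ⧸ P)) := by
    rw [annihilator_pushforward, Ideal.annihilator_quotient]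
    exact fun a ha => P.pow_mem_of_mem ha _ (pow_pos hp.out.pos 1)
  obtain ⟨r, hr⟩ := exists_isBigO_hilbertKunzRatio_sub_mul hJ p hd hP hann
  refine exists_tendsto_of_summable_sub_mul (ρ := r / (p : ℝ) ^ d)
    (hilbertKunzRatio_nonneg J p d (C ⧸ P)) (bddAbove_range_hilbertKunzRatio hJ p hd (C ⧸ P)) ?_
  refine ((summable_of_isBigO_inv_pow hr).div_const ((p : ℝ) ^ d)).congr fun e => ?_
  have hp₀ : (p : ℝ) ≠ 0 := Nat.cast_ne_zero.2 hp.out.ne_zero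
  rw [hilbertKunzRatio_pushforward p hperf, one_mul]
  field_simp

theorem exists_tendsto_hilbertKunzRatio_of_nilradical_le_annihilator {N : Type*}
    [AddCommGroup N] [Module C N] [Module.Finite C N] (hN : nilradical C ≤ Module.annihilator C N) :
    ∃ L, Tendsto (hilbertKunzRatio J p d N) atTop (𝓝 L) := by
  have : Fintype (minimalPrimes C) := (minimalPrimes.finite_of_isNoetherianRing C).fintype
  obtain ⟨r, hr⟩ := exists_isBigO_hilbertKunzRatio_sub_sum hJ p hd hN
  choose L hL using fun P : minimalPrimes C =>
    exists_tendsto_hilbertKunzRatio_of_mem_minimalPrimes hJ p hd hperf hF P.2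
  have hsum := tendsto_finsetSum Finset.univ fun P (_ : P ∈ Finset.univ) => (hL P).const_mul (r P)
  exact ⟨_, ((summable_of_isBigO_inv_pow hr).tendsto_atTop_zero.add hsum).congr fun e =>
    sub_add_cancel _ _⟩

theorem exists_tendsto_hilbertKunzRatio_of_frobenius_finite (M : Type*) [AddCommGroup M]
    [Module C M] [Module.Finite C M] : ∃ L, Tendsto (hilbertKunzRatio J p d M) atTop (𝓝 L) := by
  obtain ⟨k, hk⟩ := IsNoetherianRing.isNilpotent_nilradical C
  have hfin := finite_pushforward _ M (iterateFrobenius_finite p hF k)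
  have hann : nilradical C ≤ Module.annihilator C (Pushforward (iterateFrobenius C p k) M) := by
    intro a ha
    have hzero : iterateFrobenius C p k a = 0 := by
      have h := Ideal.pow_le_pow_right (Nat.lt_pow_self hp.out.one_lt).le
        (Ideal.pow_mem_pow ha (p ^ k))
      rwa [hk] at h
    rw [annihilator_pushforward, Ideal.mem_comap, hzero]
    exact zero_mem _
  obtain ⟨L, hL⟩ :=
    exists_tendsto_hilbertKunzRatio_of_nilradical_le_annihilator hJ p hd hperf hF hann
  have hp₀ : (p : ℝ) ^ (k * d) ≠ 0 := pow_ne_zero _ (Nat.cast_ne_zero.2 hp.out.ne_zero)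
  refine ⟨((p : ℝ) ^ (k * d))⁻¹ * L, (tendsto_add_atTop_iff_nat k).1 ?_⟩
  refine (hL.const_mul ((p : ℝ) ^ (k * d))⁻¹).congr fun e => ?_
  rw [hilbertKunzRatio_pushforward p hperf, inv_mul_cancel_left₀ hp₀]

end Convergence

section FormalSmoothness

open MvPolynomial

theorem subsingleton_h1Cotangent_iff {R S ι : Type*} [CommRing R] [CommRing S] [Algebra R S]
    (P : Algebra.Generators R S ι) :
    Subsingleton P.toExtension.H1Cotangent ↔
      ∀ f ∈ P.ker, (∀ i, aeval P.val (pderiv i f) = 0) → f ∈ P.ker ^ 2 := by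
  rw [Algebra.Extension.subsingleton_h1Cotangent, injective_iff_map_eq_zero]
  have key (f : P.ker) : P.toExtension.cotangentComplex (.mk f) = 0 ↔
      ∀ i, aeval P.val (pderiv i f.1) = 0 := by
    rw [← P.cotangentSpaceBasis.repr.map_eq_zero_iff, Finsupp.ext_iff]
    refine forall_congr' fun i => ?_
    exact (P.cotangentSpaceBasis_repr_one_tmul f.1 i).congr_left
  constructor
  · intro h f hf hd
    exact (Algebra.Extension.Cotangent.mk_eq_zero_iff _).1 (h _ ((key ⟨f, hf⟩).2 hd))
  · intro h x hx
    obtain ⟨f, rfl⟩ := Algebra.Extension.Cotangent.mk_surjective x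
    exact (Algebra.Extension.Cotangent.mk_eq_zero_iff _).2 (h _ f.2 ((key f).1 hx))

theorem aeval_generators_self_rename {R S T : Type*} [CommRing R] [CommRing S] [CommRing T]
    [Algebra R S] [Algebra R T] (φ : S →ₐ[R] T) (g : MvPolynomial S R) :
    aeval (Algebra.Generators.self R T).val (rename φ g) =
      φ (aeval (Algebra.Generators.self R S).val g) := by
  rw [aeval_rename, ← AlgHom.comp_apply, comp_aeval]
  rfl

theorem ker_generators_self_le_comap_rename {R S T : Type*} [CommRing R] [CommRing S]
    [CommRing T] [Algebra R S] [Algebra R T] (φ : S →ₐ[R] T) :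
    (Algebra.Generators.self R S).ker ≤ (Algebra.Generators.self R T).ker.comap (rename φ) := by
  intro g hg
  rw [Algebra.Generators.ker_eq_ker_aeval_val, RingHom.mem_ker] at hg
  rw [Ideal.mem_comap, Algebra.Generators.ker_eq_ker_aeval_val, RingHom.mem_ker,
    aeval_generators_self_rename, hg, map_zero]

theorem formallySmooth_of_perfectField (K L : Type*) [Field K] [PerfectField K] [Field L]
    [Algebra K L] : Algebra.FormallySmooth K L := by
  refine ⟨inferInstance, (subsingleton_h1Cotangent_iff (Algebra.Generators.self K L)).2 ?_⟩
  intro f hf hd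
  -- `f` already lives over the finitely generated extension `E` generated by its variables.
  obtain ⟨s, q, rfl⟩ := exists_finset_rename f
  let E := IntermediateField.adjoin K (s : Set L)
  have : Algebra.EssFiniteType K E :=
    IntermediateField.essFiniteType_iff.2 (IntermediateField.fg_adjoin_finset s)
  let inc : s → E := fun x => ⟨x, IntermediateField.subset_adjoin K _ x.2⟩
  have hq : rename (↑) q = rename E.val (rename inc q) := (rename_rename inc E.val q).symm
  have aeval_eq_zero {g : MvPolynomial E K}
      (hg : aeval (Algebra.Generators.self K L).val (rename E.val g) = 0) :
      aeval (Algebra.Generators.self K E).val g = 0 :=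
    (map_eq_zero E.val).1 (by rw [← aeval_generators_self_rename, hg])
  have mem_ker_sq : rename inc q ∈ (Algebra.Generators.self K E).ker ^ 2 := by
    refine (subsingleton_h1Cotangent_iff _).1
      (Algebra.FormallySmooth.subsingleton_h1Cotangent (R := K) (A := E)) _ ?_ fun e => ?_
    · rw [Algebra.Generators.ker_eq_ker_aeval_val, RingHom.mem_ker] at hf ⊢
      exact aeval_eq_zero (hq ▸ hf)
    · refine aeval_eq_zero ?_
      rw [← pderiv_rename (f := E.val) Subtype.val_injective, ← hq]
      exact hd (E.val e)
  rw [hq]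
  exact (Ideal.pow_right_mono (ker_generators_self_le_comap_rename E.val) 2).trans
    (Ideal.le_comap_pow _ 2) mem_ker_sq

end FormalSmoothness

section Complete

variable {C : Type*} [CommRing C]

theorem exists_comp_algebraMap_adicCompletion_eq {P : Type*} [CommRing P] {𝔫 : Ideal P}
    {I : Ideal C} [IsAdicComplete I C] {a : P →+* C} (ha : 𝔫.map a ≤ I) :
    ∃ Φ : AdicCompletion 𝔫 P →+* C, Φ.comp (algebraMap P (AdicCompletion 𝔫 P)) = a := by
  have hpow (k : ℕ) : 𝔫 ^ k ≤ (I ^ k).comap a := by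
    rw [← Ideal.map_le_iff_le_comap, Ideal.map_pow]
    exact Ideal.pow_right_mono ha k
  let F (k : ℕ) : AdicCompletion 𝔫 P →+* C ⧸ I ^ k :=
    (Ideal.quotientMap (I ^ k) a (hpow k)).comp (AdicCompletion.evalₐ 𝔫 k).toRingHom
  have hF {m k : ℕ} (hmk : m ≤ k) : (Ideal.Quotient.factorPow I hmk).comp (F k) = F m := by
    ext x
    obtain ⟨x, rfl⟩ := AdicCompletion.mk_surjective 𝔫 P x
    have hx := (x.2 hmk).symm
    rw [SModEq.sub_mem, smul_eq_mul, Ideal.mul_top] at hx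
    simpa [F, Ideal.Quotient.factorPow, Ideal.Quotient.eq] using hpow m hx
  refine ⟨IsAdicComplete.liftRingHom I F hF, DFunLike.coe_injective ?_⟩
  refine IsHausdorff.funext' I fun k x => ?_
  rw [RingHom.comp_apply, IsAdicComplete.mk_liftRingHom]
  change Ideal.quotientMap (I ^ k) a (hpow k) (AdicCompletion.evalₐ 𝔫 k (algebraMap P _ x)) = _
  rw [AlgHom.commutes]
  rfl

theorem isNoetherianRing_of_isAdicComplete [IsLocalRing C] [IsAdicComplete (maximalIdeal C) C]
    (hfg : (maximalIdeal C).FG) (K : Type*) [Field K] [Algebra K C]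
    (hK : Function.Surjective (algebraMap K (ResidueField C))) : IsNoetherianRing C := by
  obtain ⟨n, g, hg⟩ := Submodule.fg_iff_exists_fin_generating_family.1 hfg
  let 𝔫 := MvPolynomial.idealOfVars (Fin n) K
  let a : MvPolynomial (Fin n) K →+* C := (MvPolynomial.aeval g).toRingHom
  have ha : 𝔫.map a = maximalIdeal C := by
    rw [Ideal.map_span, ← Set.range_comp, ← hg]
    exact congrArg (Ideal.span <| Set.range ·) (funext (MvPolynomial.aeval_X g))
  obtain ⟨Φ, hΦ⟩ := exists_comp_algebraMap_adicCompletion_eq ha.le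
  let 𝔫' := 𝔫.map (algebraMap _ (AdicCompletion 𝔫 (MvPolynomial (Fin n) K)))
  have hmap : 𝔫'.map Φ = maximalIdeal C := by rw [Ideal.map_map, hΦ, ha]
  have : IsNoetherianRing (AdicCompletion 𝔫 (MvPolynomial (Fin n) K)) :=
    isNoetherianRing_of_ringEquiv (MvPowerSeries (Fin n) K)
      (MvPowerSeries.toAdicCompletionAlgEquiv (Fin n) K).toRingEquiv
  have : IsAdicComplete 𝔫' (AdicCompletion 𝔫 (MvPolynomial (Fin n) K)) :=
    AdicCompletion.isAdicComplete_self 𝔫 (MvPolynomial.idealOfVars_fg _ _)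
  have : IsHausdorff (𝔫'.map Φ) C := hmap ▸ inferInstance
  refine isNoetherianRing_of_surjective _ C Φ ?_
  refine surjective_of_mk_map_comp_surjective (I := 𝔫') Φ ?_
  rw [hmap]
  intro y
  obtain ⟨x, rfl⟩ := hK y
  refine ⟨algebraMap (MvPolynomial (Fin n) K) _ (MvPolynomial.C x), congrArg (residue C) ?_⟩
  exact (RingHom.congr_fun hΦ _).trans (MvPolynomial.aeval_C g x)

theorem isPrecomplete_pi {ι : Type*} [Finite ι] (I : Ideal C) (X : ι → Type*)
    [∀ i, AddCommGroup (X i)] [∀ i, Module C (X i)] [∀ i, IsPrecomplete I (X i)] :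
    IsPrecomplete I (∀ i, X i) := by
  classical
  have := Fintype.ofFinite ι
  rw [← AdicCompletion.of_surjective_iff]
  intro x
  choose y hy using fun i =>
    AdicCompletion.of_surjective I (X i) (AdicCompletion.pi I X x i)
  refine ⟨y, (AdicCompletion.piEquivOfFintype I X).injective (funext fun i => ?_)⟩
  rw [AdicCompletion.piEquivOfFintype_apply, AdicCompletion.piEquivOfFintype_apply, ← hy]
  exact AdicCompletion.map_of I _ _

theorem finite_of_finite_quotient_smul_top (I : Ideal C) [IsPrecomplete I C] (N : Type*)
    [AddCommGroup N] [Module C N] [IsHausdorff I N]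
    [Module.Finite C (N ⧸ (I • ⊤ : Submodule C N))] : Module.Finite C N := by
  obtain ⟨r, f, hf⟩ := Module.Finite.exists_fin' C (N ⧸ (I • ⊤ : Submodule C N))
  obtain ⟨g, rfl⟩ := Module.projective_lifting_property _ f (Submodule.mkQ_surjective _)
  have : IsPrecomplete I (Fin r → C) := isPrecomplete_pi I _
  exact .of_surjective g (surjective_of_mkQ_comp_surjective (I := I) hf)

theorem isHausdorff_pushforward {A B : Type*} [CommRing A] [CommRing B] (φ : A →+* B) (I : Ideal A)
    (X : Type*) [AddCommGroup X] [Module B X] [hX : IsHausdorff (I.map φ) X] :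
    IsHausdorff I (Pushforward φ X) := by
  let := φ.toAlgebra
  let : Module B (Pushforward φ X) := inferInstanceAs (Module B X)
  have : IsScalarTower A B (Pushforward φ X) := ⟨fun a b x => mul_smul (φ a) b (x : X)⟩
  have : IsHausdorff (I.map (algebraMap A B)) (Pushforward φ X) := hX
  exact IsHausdorff.map_algebraMap_iff.1 this

theorem frobenius_finite_of_isAdicComplete [IsLocalRing C] [IsNoetherianRing C]
    [IsAdicComplete (maximalIdeal C) C] (p : ℕ) [Fact p.Prime] [CharP C p]
    (hperf : ∀ x : ResidueField C, ∃ y, y ^ p = x) :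
    (frobenius C p).Finite := by
  rw [← iterateFrobenius_one]
  let N := Pushforward (iterateFrobenius C p 1) C
  have hlength : Module.length C (N ⧸ (maximalIdeal C • ⊤ : Submodule C N)) ≠ ⊤ := by
    change quotLength (maximalIdeal C) N ≠ ⊤
    rw [quotLength_pushforward _ _ (residueFieldMap_iterateFrobenius_surjective p hperf 1)]
    exact quotLength_bracketPow_ne_top Ideal.le_radical (p ^ 1) C
  have := (isFiniteLength_iff_isNoetherian_isArtinian.1
    (Module.length_ne_top_iff.1 hlength)).1
  have : Module.Finite C (N ⧸ (maximalIdeal C • ⊤ : Submodule C N)) := inferInstance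
  have : IsHausdorff ((maximalIdeal C).map (iterateFrobenius C p 1)) C :=
    .of_isLocalRing _ _ (map_maximalIdeal_lt_top _).ne
  have : IsHausdorff (maximalIdeal C) N := isHausdorff_pushforward _ _ C
  exact finite_of_finite_quotient_smul_top (maximalIdeal C) N

end Complete

section Completion

variable {R : Type*} [CommRing R]

theorem ker_evalₐ_eq_map {I : Ideal R} (hI : I.FG) (n : ℕ) :
    RingHom.ker (AdicCompletion.evalₐ I n) = (I ^ n).map (algebraMap R (AdicCompletion I R)) := by
  ext x
  obtain ⟨r, hr⟩ := Ideal.Quotient.mk_surjective (AdicCompletion.evalₐ I n x)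
  have heval : AdicCompletion.eval I R n x = 0 ↔ r ∈ I ^ n := by
    rw [← AdicCompletion.factor_evalₐ_eq_eval I x (by simp), ← hr, Ideal.Quotient.factor_mk,
      Ideal.Quotient.eq_zero_iff_mem, smul_eq_mul, Ideal.mul_top]
  rw [RingHom.mem_ker, ← hr, Ideal.Quotient.eq_zero_iff_mem, ← heval, ← LinearMap.mem_ker,
    ← AdicCompletion.pow_smul_top_eq_ker_eval hI, Ideal.smul_top_eq_map,
    Submodule.restrictScalars_mem]

theorem length_quotient_map_adicCompletion {I J : Ideal R} (hI : I.FG) {n : ℕ} (hJ : I ^ n ≤ J) :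
    Module.length (AdicCompletion I R)
      (AdicCompletion I R ⧸ J.map (algebraMap R (AdicCompletion I R))) =
      Module.length R (R ⧸ J) := by
  let C := AdicCompletion I R
  let 𝔠 := J.map (algebraMap R C)
  have hsurj : Function.Surjective (algebraMap R (C ⧸ 𝔠)) := by
    intro y
    obtain ⟨c, rfl⟩ := Ideal.Quotient.mk_surjective y
    obtain ⟨r, hr⟩ := Ideal.Quotient.mk_surjective (AdicCompletion.evalₐ I n c)
    refine ⟨r, Ideal.Quotient.eq.2 (Ideal.map_mono hJ ?_)⟩
    rw [← ker_evalₐ_eq_map hI, RingHom.mem_ker, map_sub, AlgHom.commutes, sub_eq_zero]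
    exact hr
  have hker : LinearMap.ker (Algebra.linearMap R (C ⧸ 𝔠)) = J := by
    refine le_antisymm (fun r hr => ?_) fun r hr =>
      Ideal.Quotient.eq_zero_iff_mem.2 (Ideal.mem_map_of_mem _ hr)
    have hmem := Ideal.mem_map_of_mem (AdicCompletion.evalₐ I n).toRingHom
      (Ideal.Quotient.eq_zero_iff_mem.1 hr)
    rw [Ideal.map_map, AlgHom.toRingHom_eq_coe, AlgHom.comp_algebraMap] at hmem
    exact (Ideal.mem_quotient_iff_mem hJ).1 hmem
  calc
    Module.length C (C ⧸ 𝔠) = Module.length (C ⧸ 𝔠) (C ⧸ 𝔠) :=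
      Module.length_eq_of_surjective Ideal.Quotient.mk_surjective
    _ = Module.length R (C ⧸ 𝔠) := (Module.length_eq_of_surjective hsurj).symm
    _ = Module.length R (R ⧸ J) :=
      ((Submodule.quotEquivOfEq _ _ hker.symm).trans
        ((Algebra.linearMap R (C ⧸ 𝔠)).quotKerEquivOfSurjective hsurj)).length_eq.symm

end Completion

section Extension

theorem ringKrullDim_le_of_map_maximalIdeal_eq {A C : Type*} [CommRing A] [IsLocalRing A]
    [IsNoetherianRing A] [CommRing C] [IsLocalRing C] [IsNoetherianRing C] {f : A →+* C}
    (hf : (maximalIdeal A).map f = maximalIdeal C) : ringKrullDim C ≤ ringKrullDim A := by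
  classical
  obtain ⟨s, hs, hcard⟩ := Ideal.exists_finset_card_eq_height_of_isNoetherianRing (maximalIdeal A)
  have hmin : maximalIdeal C ∈ (Ideal.span (s.image f : Set C)).minimalPrimes := by
    rw [Finset.coe_image, ← Ideal.map_span, maximalIdeal_mem_minimalPrimes_iff, ← hf]
    refine ⟨ne_top_of_le_ne_top (maximalIdeal.isMaximal C).ne_top
      (hf ▸ Ideal.map_mono hs.1.2), ?_⟩
    exact (Ideal.map_mono (maximalIdeal_mem_minimalPrimes_iff.1 hs).2).trans
      (Ideal.map_radical_le f)
  rw [← maximalIdeal_height_eq_ringKrullDim, ← maximalIdeal_height_eq_ringKrullDim, ← hcard]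
  exact_mod_cast (Ideal.height_le_card_of_mem_minimalPrimes_span_finset hmin).trans
    (Nat.cast_le.2 Finset.card_image_le)

theorem isLocalRing_of_isMaximal_map {B R : Type*} [CommRing B] [IsLocalRing B] [CommRing R]
    [Algebra B R] [Algebra.IsIntegral B R]
    (h : ((maximalIdeal B).map (algebraMap B R)).IsMaximal) : IsLocalRing R := by
  refine .of_unique_max_ideal ⟨_, h, fun Q hQ => (h.eq_of_le hQ.ne_top ?_).symm⟩
  have := Ideal.isMaximal_comap_of_isIntegral_of_isMaximal (R := B) Q
  exact Ideal.map_le_iff_le_comap.2 (eq_maximalIdeal this).ge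

section TensorProduct

attribute [local instance] Algebra.TensorProduct.rightAlgebra

variable {k B K : Type*} [CommRing B]

theorem algebraMap_quotient_tensorProduct_surjective [CommRing k] [CommRing K] [Algebra k B]
    [Algebra k K] {I : Ideal B} (h : Function.Surjective (algebraMap k (B ⧸ I))) :
    Function.Surjective (algebraMap K (B ⊗[k] K ⧸ I.map (algebraMap B (B ⊗[k] K)))) := by
  intro y
  obtain ⟨y, rfl⟩ := Ideal.Quotient.mk_surjective y
  induction y using TensorProduct.induction_on with
  | zero => exact ⟨0, by simp only [map_zero]⟩
  | add y z hy hz =>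
    obtain ⟨x, hx⟩ := hy
    obtain ⟨x', hx'⟩ := hz
    exact ⟨x + x', by rw [map_add, hx, hx', map_add]⟩
  | tmul b c =>
    obtain ⟨a, ha⟩ := h (Ideal.Quotient.mk I b)
    have hmem : algebraMap k B a - b ∈ I := Ideal.Quotient.eq.1 ha
    have htmul : (1 : B) ⊗ₜ[k] (a • c) - b ⊗ₜ c =
        algebraMap B (B ⊗[k] K) (algebraMap k B a - b) * 1 ⊗ₜ c := by
      rw [Algebra.TensorProduct.algebraMap_apply, Algebra.TensorProduct.tmul_mul_tmul, mul_one,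
        one_mul, Algebra.algebraMap_self_apply, TensorProduct.sub_tmul,
        Algebra.algebraMap_eq_smul_one, TensorProduct.smul_tmul]
    refine ⟨a • c, Ideal.Quotient.eq.2 ?_⟩
    exact htmul ▸ Ideal.mul_mem_right _ _ (Ideal.mem_map_of_mem _ hmem)

theorem isMaximal_map_tensorProduct [Field k] [Field K] [Algebra k B] [Algebra k K] {I : Ideal B}
    [hI : I.IsMaximal] (h : Function.Surjective (algebraMap k (B ⧸ I))) :
    (I.map (algebraMap B (B ⊗[k] K))).IsMaximal := by
  have hne : I.map (algebraMap B (B ⊗[k] K)) ≠ ⊤ := fun htop =>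
    Module.FaithfullyFlat.submodule_ne_top (M := B ⊗[k] K) hI
      (by rw [Ideal.smul_top_eq_map, htop, Submodule.restrictScalars_top])
  have := Ideal.Quotient.nontrivial_iff.2 hne
  let e := RingEquiv.ofBijective (algebraMap K (B ⊗[k] K ⧸ I.map (algebraMap B (B ⊗[k] K))))
    ⟨RingHom.injective _, algebraMap_quotient_tensorProduct_surjective h⟩
  exact Ideal.Quotient.maximal_of_isField _ (e.symm.toMulEquiv.isField (Field.toIsField K))

end TensorProduct

end Extension

section Flat

variable {A R : Type*} [CommRing A] [IsLocalRing A] [CommRing R] [IsLocalRing R]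

theorem isLocalHom_of_map_maximalIdeal_eq {f : A →+* R}
    (hf : (maximalIdeal A).map f = maximalIdeal R) : IsLocalHom f :=
  ((local_hom_TFAE f).out 0 2).2 hf.le

variable [Algebra A R] [Module.Flat A R]
  (hmap : (maximalIdeal A).map (algebraMap A R) = maximalIdeal R)

include hmap

theorem length_quotient_map_of_flat (𝔞 : Ideal A) :
    Module.length R (R ⧸ 𝔞.map (algebraMap A R)) = Module.length A (A ⧸ 𝔞) := by
  have := isLocalHom_of_map_maximalIdeal_eq hmap
  rw [(Algebra.TensorProduct.quotIdealMapEquivTensorQuot R 𝔞).toLinearEquiv.length_eq,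
    IsLocalRing.length_baseChange, hmap]
  have h : Module.length R (R ⧸ maximalIdeal R) = 1 :=
    Module.length_eq_one_iff.2 (isSimpleModule_iff_isCoatom.2 (Ideal.isMaximal_def.1 inferInstance))
  rw [h, mul_one]

variable [IsNoetherianRing A]

theorem quotLength_map_adicCompletion {𝔞 : Ideal A} (h𝔞 : maximalIdeal A ≤ 𝔞.radical) :
    quotLength (𝔞.map ((algebraMap R (AdicCompletion (maximalIdeal R) R)).comp (algebraMap A R)))
      (AdicCompletion (maximalIdeal R) R) = quotLength 𝔞 A := by
  have hfg : (maximalIdeal R).FG := hmap ▸ (maximalIdeal A).fg_of_isNoetherianRing.map _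
  obtain ⟨n, hn⟩ := Ideal.exists_pow_le_of_le_radical_of_fg h𝔞 (IsNoetherian.noetherian _)
  have hn' : maximalIdeal R ^ n ≤ 𝔞.map (algebraMap A R) := by
    rw [← hmap, ← Ideal.map_pow]
    exact Ideal.map_mono hn
  rw [quotLength_self, quotLength_self, ← Ideal.map_map,
    length_quotient_map_adicCompletion hfg hn', length_quotient_map_of_flat hmap]

theorem exists_tendsto_hilbertKunzRatio_of_flat (p : ℕ) [Fact p.Prime] [CharP A p] {d : ℕ}
    (hd : ringKrullDim A ≤ d) (K : Type*) [Field K] [Algebra K R]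
    (hK : Function.Surjective (algebraMap K (ResidueField R)))
    (hperf : ∀ x : K, ∃ y, y ^ p = x) {I : Ideal A} (hI : maximalIdeal A ≤ I.radical) :
    ∃ L, Tendsto (hilbertKunzRatio I p d A) atTop (𝓝 L) := by
  let C := AdicCompletion (maximalIdeal R) R
  let ι : A →+* C := (algebraMap R C).comp (algebraMap A R)
  have hfg : (maximalIdeal R).FG := hmap ▸ (maximalIdeal A).fg_of_isNoetherianRing.map _
  have : IsLocalRing C := AdicCompletion.isLocalRing_of_fg hfg
  have : IsAdicComplete (maximalIdeal C) C := AdicCompletion.isAdicComplete_of_fg hfg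
  have := AdicCompletion.algebraMap_isLocalHom_of_fg hfg
  have hι : (maximalIdeal A).map ι = maximalIdeal C := by
    rw [← Ideal.map_map, hmap, AdicCompletion.maximalIdeal_eq_map_of_fg hfg]
  have hKC : Function.Surjective (algebraMap K (ResidueField C)) :=
    (AdicCompletion.residueField_map_bijective_of_fg hfg).2.comp hK
  have hpC : ∀ x : ResidueField C, ∃ y, y ^ p = x := hKC.forall.2 fun x =>
    (hperf x).imp' (algebraMap K _) fun y hy => by rw [← map_pow, hy]
  have : IsNoetherianRing C := isNoetherianRing_of_isAdicComplete
    (hι ▸ (maximalIdeal A).fg_of_isNoetherianRing.map ι) K hKC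
  have : CharP C p := (CharP.charP_iff_prime_eq_zero Fact.out).2
    (by rw [← map_natCast ι, CharP.cast_eq_zero, map_zero])
  have hlim := exists_tendsto_hilbertKunzRatio_of_frobenius_finite (J := I.map ι)
    (hι ▸ (Ideal.map_mono hI).trans (Ideal.map_radical_le ι)) p
    ((ringKrullDim_le_of_map_maximalIdeal_eq hι).trans hd) hpC
    (frobenius_finite_of_isAdicComplete p hpC) C
  refine hlim.imp fun L hL => hL.congr fun e => ?_
  rw [hilbertKunzRatio, hilbertKunzRatio, ← map_bracketPow_pow, quotLength_map_adicCompletion hmap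
    (hI.trans (Ideal.radical_le_radical_iff.2 (le_radical_bracketPow I _)))]

end Flat

section CoefficientField

variable {A : Type*} [CommRing A] [IsLocalRing A] [IsNoetherianRing A] (p : ℕ) [Fact p.Prime]
  [CharP A p]

attribute [local instance] Algebra.TensorProduct.rightAlgebra in
theorem exists_tendsto_hilbertKunzRatio_of_coefficientField {B : Type*} [CommRing B]
    [IsLocalRing B] [Algebra A B] [Module.Flat A B]
    (hmap : (maximalIdeal A).map (algebraMap A B) = maximalIdeal B) (k : Type*) [Field k]
    [Algebra k B] (hk : Function.Surjective (algebraMap k (ResidueField B))) {d : ℕ}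
    (hd : ringKrullDim A ≤ d) {I : Ideal A} (hI : maximalIdeal A ≤ I.radical) :
    ∃ L, Tendsto (hilbertKunzRatio I p d A) atTop (𝓝 L) := by
  let K := AlgebraicClosure k
  let R := B ⊗[k] K
  have hmax : ((maximalIdeal B).map (algebraMap B R)).IsMaximal := isMaximal_map_tensorProduct hk
  have : IsLocalRing R := isLocalRing_of_isMaximal_map hmax
  have hR : (maximalIdeal B).map (algebraMap B R) = maximalIdeal R := eq_maximalIdeal hmax
  have : Module.Flat A R := Module.Flat.trans A B R
  have hAR : (maximalIdeal A).map (algebraMap A R) = maximalIdeal R := by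
    rw [IsScalarTower.algebraMap_eq A B R, ← Ideal.map_map, hmap, hR]
  have hK : Function.Surjective (algebraMap K (R ⧸ maximalIdeal R)) :=
    hR ▸ algebraMap_quotient_tensorProduct_surjective hk
  exact exists_tendsto_hilbertKunzRatio_of_flat hAR p hd K hK
    (fun x => IsAlgClosed.exists_pow_nat_eq x (Fact.out : p.Prime).pos) hI

include p in
theorem exists_coefficientField_adicCompletion :
    ∃ g : ResidueField A →+* AdicCompletion (maximalIdeal A) A,
      Function.Surjective ((residue _).comp g) := by
  let := ZMod.algebra A p
  let : Field (A ⧸ maximalIdeal A) := Ideal.Quotient.field _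
  have := formallySmooth_of_perfectField (ZMod p) (A ⧸ maximalIdeal A)
  obtain ⟨g, hg⟩ := Algebra.FormallySmooth.exists_adicCompletionEvalOneₐ_comp_eq
    (R := ZMod p) (A := A ⧸ maximalIdeal A) (S := A) (I := maximalIdeal A) (AlgHom.id _ _)
  refine ⟨g.toRingHom, fun y => ?_⟩
  obtain ⟨y, rfl⟩ := residue_surjective y
  refine ⟨AdicCompletion.evalOneₐ _ y, Ideal.Quotient.eq.2 ?_⟩
  rw [AdicCompletion.maximalIdeal_eq_map,
    ← AdicCompletion.ker_evalOneₐ_eq_map _ (IsNoetherian.noetherian _), RingHom.mem_ker, map_sub,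
    sub_eq_zero]
  exact DFunLike.congr_fun hg _

end CoefficientField

end HilbertKunz

/-- **Monsky.** For an `𝔪`-primary ideal `I` of a `d`-dimensional Noetherian local ring
of characteristic `p`, the Hilbert–Kunz multiplicity
`e_HK(I) = lim_e ℓ_A(A/I^{[p^e]}) / p^{ed}` exists. -/
theorem hilbert_kunz_multiplicity_exists (A : Type*) [CommRing A] [IsLocalRing A]
    [IsNoetherianRing A] (p : ℕ) [Fact p.Prime] [CharP A p]
    (d : ℕ) (hd : ringKrullDim A = d)
    (I : Ideal A) (hI : I.radical = IsLocalRing.maximalIdeal A) :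
    ∃ L : ℝ, Filter.Tendsto
      (fun e : ℕ =>
        ((moduleLength A (A ⧸ I.bracketPow (p ^ e))).toNat : ℝ) / (p : ℝ) ^ (e * d))
      Filter.atTop (nhds L) := by
  obtain ⟨g, hg⟩ := HilbertKunz.exists_coefficientField_adicCompletion (A := A) p
  let := g.toAlgebra
  have : Module.Flat A (AdicCompletion (maximalIdeal A) A) :=
    AdicCompletion.flat_of_isNoetherian _
  obtain ⟨L, hL⟩ := HilbertKunz.exists_tendsto_hilbertKunzRatio_of_coefficientField p
    AdicCompletion.maximalIdeal_eq_map.symm (ResidueField A) hg hd.le hI.ge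
  refine ⟨L, hL.congr fun e => ?_⟩
  rw [HilbertKunz.hilbertKunzRatio, HilbertKunz.quotLength_self, moduleLength,
    Module.length_eq_height]
end

section
/- (Lech) Let (A, 𝔪) be a d-dimensional Noetherian local ring of prime characteristic p and let I ⊆ A be an 𝔪-primary ideal generated by d elements (i.e., generated by a full system of parameters). Then the Hilbert–Samuel multiplicity and the Hilbert–Kunz multiplicity of I coincide: there is a real number L with lim_{n→∞} d!·ℓ_A(A/I^n)/n^d = L = lim_{e→∞} ℓ_A(A/I^{[p^e]})/p^{ed}. -/
open IsLocalRing Filter Topology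
open scoped TensorProduct

/-!
Filter `A` by the ideals spanned by the monomials `x ^ b` with `a < b` in the graded lexicographic
order. The graded piece at `a` is `A` modulo the colon ideal `initialColon x a`, which grows with
`a` in the divisibility order. The length of this piece is therefore antitone in `a`, hence constant
(equal to `stableLength x`, say) for all `a` above some `a₀`.

Adding up the pieces with `|a| < n` gives the length of `A ⧸ I ^ n` exactly, and almost all of these
`a` lie above `a₀`, so the Hilbert–Samuel limit is `stableLength x`. Adding up the pieces with all
`a i < n` bounds the length of `A ⧸ (xᵢ ^ n)` from above. For the bound from below, compare the
Hilbert–Samuel limits of `x` and of the sequence `xᵢ ^ n`: as `(xᵢ ^ n) ^ m ≤ I ^ (n * m)`, the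
latter is at least `n ^ d` times the former, and it is at most the length of `A ⧸ (xᵢ ^ n)`.
-/

section QuotientLength

variable {A : Type*} [CommRing A]

theorem moduleLength_eq_length (R M : Type*) [Ring R] [AddCommGroup M] [Module R M] :
    moduleLength R M = Module.length R M :=
  (Module.length_eq_height R M).symm

theorem length_quotient_antitone : Antitone fun K : Ideal A => Module.length A (A ⧸ K) :=
  fun _ _ h => Module.length_le_of_surjective (Submodule.factor h) (Submodule.factor_surjective h)

theorem length_quotient_eq_colon_add_sup (K : Ideal A) (y : A) :
    Module.length A (A ⧸ K) =
      Module.length A (A ⧸ K.colon {y}) + Module.length A (A ⧸ K ⊔ Ideal.span {y}) := by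
  have colon_eq : K.colon {y} = Submodule.comap (LinearMap.toSpanSingleton A A y) K := by
    ext r
    simp [Submodule.mem_colon_singleton]
  refine Module.length_eq_add_of_exact
    (Submodule.mapQ (K.colon {y}) K (LinearMap.toSpanSingleton A A y) colon_eq.le)
    (Submodule.factor (le_sup_left : K ≤ K ⊔ Ideal.span {y})) ?_
    (Submodule.factor_surjective _) ?_
  · rw [← LinearMap.ker_eq_bot, Submodule.ker_mapQ, ← colon_eq, Submodule.mkQ_map_self]
  · rw [LinearMap.exact_iff, Submodule.range_mapQ, Submodule.factor, Submodule.ker_mapQ,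
      LinearMap.range_toSpanSingleton, Submodule.comap_id, Submodule.map_sup,
      Submodule.mkQ_map_self, bot_sup_eq]

theorem length_quotient_ne_top_of_isMaximal_radical [IsNoetherianRing A] {I : Ideal A}
    (hI : I.radical.IsMaximal) : Module.length A (A ⧸ I) ≠ ⊤ := by
  have : Ring.KrullDimLE 0 (A ⧸ I) := Ring.krullDimLE_zero_iff.mpr fun P _ => by
    have radical_le : I.radical ≤ P.comap (Ideal.Quotient.mk I) :=
      (P.comap_isPrime _).radical_le_iff.mpr
        (Ideal.mk_ker.symm.trans_le (Ideal.ker_le_comap _))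
    have : (P.comap (Ideal.Quotient.mk I)).IsMaximal :=
      hI.eq_of_le (P.comap_isPrime _).ne_top radical_le ▸ hI
    exact Ideal.isMaximal_of_isIntegral_of_isMaximal_comap P this
  have : IsArtinianRing (A ⧸ I) := IsNoetherianRing.isArtinianRing_of_krullDimLE_zero
  have : IsArtinian A (A ⧸ I) :=
    isArtinian_of_surjective_algebraMap (R := A ⧸ I) Ideal.Quotient.mk_surjective
  exact Module.length_ne_top

end QuotientLength

section MonomialFiltration

variable {A : Type*} [CommRing A] {σ : Type*}

/-- The monomial `x ^ a = ∏ i, x i ^ a i`. -/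
def monomialValue (x : σ → A) (a : σ →₀ ℕ) : A := a.prod (x · ^ ·)

/-- The ideal generated by the monomials `x ^ a` with exponent `a ∈ S`. -/
def monomialSpan (x : σ → A) (S : Set (σ →₀ ℕ)) : Ideal A :=
  Ideal.span (monomialValue x '' S)

variable (x : σ → A)

@[simp]
theorem monomialValue_zero : monomialValue x 0 = 1 := Finsupp.prod_zero_index

theorem monomialValue_add (a b : σ →₀ ℕ) :
    monomialValue x (a + b) = monomialValue x a * monomialValue x b :=
  Finsupp.prod_add_index' (fun _ => pow_zero _) fun _ => pow_add _

theorem monomialValue_single (i : σ) (n : ℕ) :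
    monomialValue x (Finsupp.single i n) = x i ^ n :=
  Finsupp.prod_single_index (pow_zero _)

theorem monomialValue_mem_monomialSpan {S : Set (σ →₀ ℕ)} {a : σ →₀ ℕ} (ha : a ∈ S) :
    monomialValue x a ∈ monomialSpan x S :=
  Ideal.subset_span (Set.mem_image_of_mem _ ha)

theorem monomialSpan_mono : Monotone (monomialSpan x) :=
  fun _ _ h => Ideal.span_mono (Set.image_mono h)

theorem monomialSpan_univ : monomialSpan x Set.univ = ⊤ := by
  rw [Ideal.eq_top_iff_one, ← monomialValue_zero x]
  exact monomialValue_mem_monomialSpan x trivial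

theorem monomialSpan_insert (a : σ →₀ ℕ) (S : Set (σ →₀ ℕ)) :
    monomialSpan x (insert a S) = monomialSpan x S ⊔ Ideal.span {monomialValue x a} := by
  rw [monomialSpan, Set.image_insert_eq, Ideal.span_insert, sup_comm, monomialSpan]

theorem length_quotient_monomialSpan_compl_empty :
    Module.length A (A ⧸ monomialSpan x (∅ : Set (σ →₀ ℕ))ᶜ) = 0 := by
  rw [Set.compl_empty, monomialSpan_univ]
  exact Module.length_eq_zero

theorem span_range_pow_eq_monomialSpan (n : ℕ) :
    Ideal.span (Set.range x) ^ n = monomialSpan x {a | n ≤ a.degree} := by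
  have span_pow_eq (k : ℕ) :
      Ideal.span (Set.range x) ^ k = monomialSpan x {a | a.degree = k} := by
    rw [Ideal.span, Submodule.span_pow, ← Set.image_univ, Finsupp.image_pow_eq_finsuppProd_image]
    simp only [Set.subset_univ, and_true]
    rfl
  refine le_antisymm (span_pow_eq n ▸ monomialSpan_mono x fun a ha => ha.ge) ?_
  rw [monomialSpan, Ideal.span_le]
  rintro _ ⟨a, ha, rfl⟩
  refine Ideal.pow_le_pow_right ha ?_
  rw [span_pow_eq]
  exact monomialValue_mem_monomialSpan x rfl

variable [LinearOrder σ]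

/-- The colon ideal `F : x ^ a`, where `F` is spanned by the monomials larger than `x ^ a` in the
graded lexicographic order: the annihilator of the `a`-th piece of the monomial filtration. -/
def initialColon (a : σ →₀ ℕ) : Ideal A :=
  (monomialSpan x {b | toDegLex a < toDegLex b}).colon {monomialValue x a}

variable {x} in
theorem mem_initialColon {a : σ →₀ ℕ} {r : A} :
    r ∈ initialColon x a ↔
      r * monomialValue x a ∈ monomialSpan x {b | toDegLex a < toDegLex b} :=
  Submodule.mem_colon_singleton

theorem initialColon_mono : Monotone (initialColon x) := by
  intro a b hab r hr
  obtain ⟨c, rfl⟩ := exists_add_of_le hab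
  have mul_mem : monomialSpan x {b | toDegLex a < toDegLex b} ≤
      (monomialSpan x {b | toDegLex (a + c) < toDegLex b}).colon {monomialValue x c} := by
    rw [monomialSpan, Ideal.span_le]
    rintro _ ⟨b, hb, rfl⟩
    rw [SetLike.mem_coe, Submodule.mem_colon_singleton, smul_eq_mul, ← monomialValue_add]
    exact monomialValue_mem_monomialSpan x (add_lt_add_left (α := DegLex (σ →₀ ℕ)) hb (toDegLex c))
  rw [mem_initialColon] at hr ⊢
  rw [monomialValue_add, ← mul_assoc]
  exact Submodule.mem_colon_singleton.mp (mul_mem hr)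

theorem toDegLex_lt_of_degree_lt {a b : σ →₀ ℕ} (h : a.degree < b.degree) :
    toDegLex a < toDegLex b :=
  Finsupp.DegLex.lt_iff.mpr (Or.inl h)

theorem span_range_le_initialColon (a : σ →₀ ℕ) :
    Ideal.span (Set.range x) ≤ initialColon x a := by
  rw [Ideal.span_le]
  rintro _ ⟨i, rfl⟩
  rw [SetLike.mem_coe, mem_initialColon, ← pow_one (x i), ← monomialValue_single,
    ← monomialValue_add]
  refine monomialValue_mem_monomialSpan x (toDegLex_lt_of_degree_lt ?_)
  rw [map_add, Finsupp.degree_single]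
  exact Nat.lt_one_add_iff.mpr le_rfl

theorem length_quotient_monomialSpan_compl_insert {S : Set (σ →₀ ℕ)} {a : σ →₀ ℕ} (ha : a ∉ S) :
    Module.length A (A ⧸ monomialSpan x (insert a S)ᶜ) =
      Module.length A (A ⧸ (monomialSpan x (insert a S)ᶜ).colon {monomialValue x a}) +
      Module.length A (A ⧸ monomialSpan x Sᶜ) := by
  have compl_eq : Sᶜ = insert a (insert a S)ᶜ := by
    ext b
    by_cases hb : b = a <;> simp [hb, ha]
  rw [compl_eq, monomialSpan_insert]
  exact length_quotient_eq_colon_add_sup _ _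

theorem setOf_toDegLex_lt_subset_compl_insert {S : Set (σ →₀ ℕ)} {a : σ →₀ ℕ}
    (hmax : ∀ b ∈ S, toDegLex b ≤ toDegLex a) :
    {b | toDegLex a < toDegLex b} ⊆ (insert a S)ᶜ := by
  rintro b (hab : toDegLex a < toDegLex b) (rfl | hb)
  · exact hab.false
  · exact hab.not_ge (hmax b hb)

theorem length_quotient_monomialSpan_compl_le (T : Finset (σ →₀ ℕ)) :
    Module.length A (A ⧸ monomialSpan x (T : Set (σ →₀ ℕ))ᶜ) ≤
      ∑ a ∈ T, Module.length A (A ⧸ initialColon x a) := by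
  classical
  induction T using Finset.induction_on_max_value (fun a : σ →₀ ℕ => toDegLex a) with
  | empty =>
    rw [Finset.coe_empty, length_quotient_monomialSpan_compl_empty, Finset.sum_empty]
  | insert a T ha hmax ih =>
    rw [Finset.coe_insert, length_quotient_monomialSpan_compl_insert x (Finset.mem_coe.not.mpr ha),
      Finset.sum_insert ha]
    exact add_le_add (length_quotient_antitone (Submodule.colon_mono
      (monomialSpan_mono x (setOf_toDegLex_lt_subset_compl_insert hmax)) subset_rfl)) ih

theorem length_quotient_monomialSpan_compl_eq {T : Finset (σ →₀ ℕ)}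
    (hT : IsLowerSet (ofDegLex ⁻¹' (T : Set (σ →₀ ℕ)))) :
    Module.length A (A ⧸ monomialSpan x (T : Set (σ →₀ ℕ))ᶜ) =
      ∑ a ∈ T, Module.length A (A ⧸ initialColon x a) := by
  classical
  induction T using Finset.induction_on_max_value (fun a : σ →₀ ℕ => toDegLex a) with
  | empty =>
    rw [Finset.coe_empty, length_quotient_monomialSpan_compl_empty, Finset.sum_empty]
  | insert a T ha hmax ih =>
    rw [Finset.coe_insert] at hT
    have compl_eq : (insert a (T : Set (σ →₀ ℕ)))ᶜ = {b | toDegLex a < toDegLex b} :=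
      Set.Subset.antisymm
        (fun _ hb => lt_of_not_ge fun hba => hb (hT hba (Set.mem_insert a _)))
        (setOf_toDegLex_lt_subset_compl_insert hmax)
    have hT' : IsLowerSet (ofDegLex ⁻¹' (T : Set (σ →₀ ℕ))) := fun c b hbc hc => by
      refine (hT hbc (Set.mem_insert_of_mem _ hc)).resolve_left ?_
      rintro rfl
      have : c = b := le_antisymm (hmax _ hc) hbc
      exact ha (this ▸ hc)
    rw [Finset.coe_insert, length_quotient_monomialSpan_compl_insert x (Finset.mem_coe.not.mpr ha),
      Finset.sum_insert ha, ih hT', compl_eq, initialColon]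

end MonomialFiltration

section ExponentCounting

theorem exists_forall_ge_eq_iInf {α : Type*} [Preorder α] [Nonempty α] {f : α → ℕ}
    (hf : Antitone f) : ∃ a₀, ∀ a, a₀ ≤ a → f a = ⨅ b, f b := by
  obtain ⟨a₀, ha₀⟩ := Nat.sInf_mem (Set.range_nonempty f)
  exact ⟨a₀, fun a ha => le_antisymm ((hf ha).trans ha₀.le) (ciInf_le' f a)⟩

theorem abs_sum_sub_const_le {α : Type*} {f : α → ℝ} {L C : ℝ} {P : α → Prop} [DecidablePred P]
    (hL : ∀ a, P a → f a = L) (hC : ∀ a, |f a - L| ≤ C) {S T : Finset α} (hT : T ⊆ S) :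
    |∑ a ∈ T, (f a - L)| ≤ C * {a ∈ S | ¬ P a}.card :=
  calc |∑ a ∈ T, (f a - L)|
    _ ≤ ∑ a ∈ T, |f a - L| := Finset.abs_sum_le_sum_abs _ _
    _ ≤ ∑ a ∈ S, |f a - L| :=
      Finset.sum_le_sum_of_subset_of_nonneg hT fun _ _ _ => abs_nonneg _
    _ = ∑ a ∈ S with ¬ P a, |f a - L| := by
      refine (Finset.sum_filter_of_ne (p := fun a => ¬ P a) fun a _ ha hP => ha ?_).symm
      rw [hL a hP, sub_self, abs_zero]
    _ ≤ ∑ a ∈ S with ¬ P a, C := Finset.sum_le_sum fun a _ => hC a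
    _ = C * {a ∈ S | ¬ P a}.card := by
      rw [Finset.sum_const, nsmul_eq_mul, mul_comm]

variable (σ : Type*) [Fintype σ]

/-- The exponents of total degree less than `n`, which index the monomials outside `I ^ n`. -/
noncomputable def exponentSimplex (n : ℕ) : Finset (σ →₀ ℕ) :=
  (Finsupp.finite_of_degree_lt n).toFinset

/-- The exponents with all entries less than `n`, which index the monomials outside `(xᵢ ^ n)`. -/
noncomputable def exponentBox (n : ℕ) : Finset (σ →₀ ℕ) :=
  Finset.univ.finsupp fun _ => Finset.range n

variable {σ}

@[simp]
theorem mem_exponentSimplex {n : ℕ} {a : σ →₀ ℕ} : a ∈ exponentSimplex σ n ↔ a.degree < n :=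
  (Finsupp.finite_of_degree_lt n).mem_toFinset

@[simp]
theorem mem_exponentBox {n : ℕ} {a : σ →₀ ℕ} : a ∈ exponentBox σ n ↔ ∀ i, a i < n := by
  simp [exponentBox, Finset.mem_finsupp_iff]

theorem exponentSimplex_subset_exponentBox (n : ℕ) : exponentSimplex σ n ⊆ exponentBox σ n :=
  fun a ha => mem_exponentBox.mpr fun i =>
    (Finsupp.le_degree i a).trans_lt (mem_exponentSimplex.mp ha)

variable (σ)

theorem card_exponentBox (n : ℕ) : (exponentBox σ n).card = n ^ Fintype.card σ := by
  simp [exponentBox, Finset.card_finsupp]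

theorem factorial_mul_card_exponentSimplex_succ (n : ℕ) :
    (Fintype.card σ).factorial * (exponentSimplex σ (n + 1)).card =
      (n + 1).ascFactorial (Fintype.card σ) := by
  classical
  have fiber_eq (k : ℕ) (hk : k ∈ Finset.range (n + 1)) :
      {a ∈ exponentSimplex σ (n + 1) | a.degree = k} = Finset.univ.finsuppAntidiag k := by
    ext a
    simp only [Finset.mem_filter, mem_exponentSimplex, Finset.mem_finsuppAntidiag,
      Finset.subset_univ, and_true, ← Finsupp.degree_eq_sum]
    exact and_iff_right_of_imp fun h => h ▸ Finset.mem_range.mp hk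
  rw [Nat.ascFactorial_eq_factorial_mul_choose, ← Nat.sum_range_multichoose,
    Finset.card_eq_sum_card_fiberwise (f := Finsupp.degree) (t := Finset.range (n + 1))
      fun a ha => Finset.mem_coe.mpr (Finset.mem_range.mpr (mem_exponentSimplex.mp ha))]
  congr 1
  refine Finset.sum_congr rfl fun k hk => ?_
  rw [fiber_eq k hk, Finset.card_finsuppAntidiag_nat_eq_multichoose, Finset.card_univ]

theorem tendsto_card_exponentSimplex :
    Tendsto (fun n : ℕ => ((Fintype.card σ).factorial : ℝ) * (exponentSimplex σ n).card /
      (n : ℝ) ^ Fintype.card σ) atTop (𝓝 1) := by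
  have prod_eq (n : ℕ) (hn : 0 < n) :
      ((Fintype.card σ).factorial : ℝ) * (exponentSimplex σ n).card / (n : ℝ) ^ Fintype.card σ =
        ∏ i ∈ Finset.range (Fintype.card σ), (1 + (i : ℝ) / n) := by
    obtain ⟨m, rfl⟩ := Nat.exists_eq_add_one.mpr hn
    rw [← Nat.cast_mul, factorial_mul_card_exponentSimplex_succ, Nat.ascFactorial_eq_prod_range,
      Nat.cast_prod, ← Finset.card_range (Fintype.card σ), ← Finset.prod_const, Finset.card_range,
      ← Finset.prod_div_distrib]
    refine Finset.prod_congr rfl fun i _ => ?_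
    rw [Nat.cast_add, add_div, div_self (by positivity)]
  have factor_tendsto (i : ℕ) : Tendsto (fun n : ℕ => 1 + (i : ℝ) / n) atTop (𝓝 1) := by
    simpa only [add_zero] using (tendsto_const_div_atTop_nhds_zero_nat (i : ℝ)).const_add 1
  have prod_tendsto := tendsto_finsetProd (Finset.range (Fintype.card σ))
    fun i _ => factor_tendsto i
  rw [Finset.prod_const_one] at prod_tendsto
  refine prod_tendsto.congr' ?_
  filter_upwards [eventually_gt_atTop 0] with n hn using (prod_eq n hn).symm

theorem tendsto_card_exponentBox :
    Tendsto (fun n : ℕ => ((exponentBox σ n).card : ℝ) / (n : ℝ) ^ Fintype.card σ) atTop (𝓝 1) := by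
  refine tendsto_const_nhds.congr' ?_
  filter_upwards [eventually_gt_atTop 0] with n hn
  rw [card_exponentBox, Nat.cast_pow, div_self (by positivity)]

variable {σ}

open scoped Classical in
theorem card_filter_le_exponentBox (a₀ : σ →₀ ℕ) (n : ℕ) :
    {a ∈ exponentBox σ n | a₀ ≤ a}.card = ∏ i, (n - a₀ i) := by
  have filter_eq : {a ∈ exponentBox σ n | a₀ ≤ a} =
      Finset.univ.finsupp fun i => Finset.Ico (a₀ i) n := by
    ext a
    simp only [Finset.mem_filter, mem_exponentBox, Finset.mem_finsupp_iff, Finset.subset_univ,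
      Finset.mem_univ, true_and, forall_const, Finset.mem_Ico, Finsupp.le_def, forall_and,
      and_comm]
  rw [filter_eq, Finset.card_finsupp]
  simp only [Nat.card_Ico]

open scoped Classical in
theorem tendsto_card_filter_not_le_exponentBox (a₀ : σ →₀ ℕ) :
    Tendsto (fun n : ℕ => ({a ∈ exponentBox σ n | ¬ a₀ ≤ a}.card : ℝ) /
      (n : ℝ) ^ Fintype.card σ) atTop (𝓝 0) := by
  have factor_tendsto (k : ℕ) : Tendsto (fun n : ℕ => ((n - k : ℕ) : ℝ) / n) atTop (𝓝 1) := by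
    have := (tendsto_const_div_atTop_nhds_zero_nat (k : ℝ)).const_sub 1
    rw [sub_zero] at this
    refine this.congr' ?_
    filter_upwards [eventually_ge_atTop k, eventually_gt_atTop 0] with n hk hn
    rw [Nat.cast_sub hk, sub_div, div_self (by positivity)]
  have good_tendsto : Tendsto (fun n : ℕ => ({a ∈ exponentBox σ n | a₀ ≤ a}.card : ℝ) /
      (n : ℝ) ^ Fintype.card σ) atTop (𝓝 1) := by
    have := tendsto_finsetProd Finset.univ fun i _ => factor_tendsto (a₀ i)
    simpa only [card_filter_le_exponentBox, Nat.cast_prod, Finset.prod_div_distrib,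
      Finset.prod_const, Finset.card_univ, one_pow] using this
  have bad_tendsto := (tendsto_card_exponentBox σ).sub good_tendsto
  rw [sub_self] at bad_tendsto
  refine bad_tendsto.congr fun n => ?_
  rw [← Finset.card_filter_add_card_filter_not (s := exponentBox σ n) (a₀ ≤ ·), Nat.cast_add]
  ring

theorem tendsto_sum_div_of_eventually_const {f : (σ →₀ ℕ) → ℝ} {L C : ℝ} {a₀ : σ →₀ ℕ}
    (hL : ∀ a, a₀ ≤ a → f a = L) (hC : ∀ a, |f a - L| ≤ C) {T : ℕ → Finset (σ →₀ ℕ)}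
    (hT : ∀ n, T n ⊆ exponentBox σ n) {c : ℝ}
    (hc : Tendsto (fun n : ℕ => c * (T n).card / (n : ℝ) ^ Fintype.card σ) atTop (𝓝 1)) :
    Tendsto (fun n : ℕ => c * (∑ a ∈ T n, f a) / (n : ℝ) ^ Fintype.card σ) atTop (𝓝 L) := by
  classical
  have error_tendsto : Tendsto
      (fun n : ℕ => c * (∑ a ∈ T n, (f a - L)) / (n : ℝ) ^ Fintype.card σ) atTop (𝓝 0) := by
    have bound_tendsto := (tendsto_card_filter_not_le_exponentBox a₀).const_mul (|c| * C)
    rw [mul_zero] at bound_tendsto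
    refine squeeze_zero_norm (fun n => ?_) bound_tendsto
    rw [Real.norm_eq_abs, abs_div, abs_mul, abs_of_nonneg (by positivity : (0 : ℝ) ≤ n ^ _),
      mul_div_assoc', mul_assoc]
    gcongr
    exact abs_sum_sub_const_le hL hC (hT n)
  have main_tendsto := (hc.const_mul L).add error_tendsto
  rw [mul_one, add_zero] at main_tendsto
  refine main_tendsto.congr fun n => ?_
  rw [Finset.sum_sub_distrib, Finset.sum_const, nsmul_eq_mul]
  ring

theorem tendsto_sum_div_of_antitone {f : (σ →₀ ℕ) → ℕ} (hf : Antitone f)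
    {T : ℕ → Finset (σ →₀ ℕ)} (hT : ∀ n, T n ⊆ exponentBox σ n) {c : ℝ}
    (hc : Tendsto (fun n : ℕ => c * (T n).card / (n : ℝ) ^ Fintype.card σ) atTop (𝓝 1)) :
    Tendsto (fun n : ℕ => c * ((∑ a ∈ T n, f a : ℕ) : ℝ) / (n : ℝ) ^ Fintype.card σ) atTop
      (𝓝 (⨅ a, f a : ℕ)) := by
  obtain ⟨a₀, ha₀⟩ := exists_forall_ge_eq_iInf hf
  simp only [Nat.cast_sum]
  refine tendsto_sum_div_of_eventually_const (fun a ha => congrArg Nat.cast (ha₀ a ha))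
    (C := f 0) (fun a => ?_) hT hc
  have le_zero : f a ≤ f 0 := hf (bot_le : (⊥ : σ →₀ ℕ) ≤ a)
  have iInf_le : ⨅ b, f b ≤ f a := ciInf_le' f a
  rw [abs_of_nonneg (sub_nonneg.mpr (Nat.cast_le.mpr iInf_le))]
  exact (sub_le_self _ (Nat.cast_nonneg _)).trans (Nat.cast_le.mpr le_zero)

end ExponentCounting

section Multiplicity

variable {A : Type*} [CommRing A] {σ : Type*}

theorem monomialSpan_compl_exponentBox_le [Fintype σ] (x : σ → A) (n : ℕ) :
    monomialSpan x (exponentBox σ n : Set (σ →₀ ℕ))ᶜ ≤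
      Ideal.span (Set.range fun i => x i ^ n) := by
  rw [monomialSpan, Ideal.span_le]
  rintro _ ⟨a, ha, rfl⟩
  obtain ⟨i, hi⟩ : ∃ i, n ≤ a i := by simpa using ha
  obtain ⟨c, rfl⟩ := exists_add_of_le (Finsupp.single_le_iff.mpr hi)
  rw [monomialValue_add, monomialValue_single]
  exact Ideal.mul_mem_right _ _ (Ideal.subset_span (Set.mem_range_self i))

theorem span_range_pow_apply_pow_le (x : σ → A) (n m : ℕ) :
    Ideal.span (Set.range fun i => x i ^ n) ^ m ≤ Ideal.span (Set.range x) ^ (n * m) := by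
  rw [pow_mul]
  refine Ideal.pow_right_mono (Ideal.span_le.mpr ?_) m
  rintro _ ⟨i, rfl⟩
  exact Ideal.pow_mem_pow (Ideal.subset_span (Set.mem_range_self i)) n

section StableLength

variable [LinearOrder σ]

/-- The length of the `a`-th piece of the monomial filtration of `A` attached to `x`; the junk value
`0` of an infinite length does not occur when `x` generates an ideal of finite colength. -/
noncomputable def gradedLength (x : σ → A) (a : σ →₀ ℕ) : ℕ :=
  (Module.length A (A ⧸ initialColon x a)).toNat

/-- The limiting value of the antitone function `gradedLength x`, which turns out to be the common
value of the multiplicities. -/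
noncomputable def stableLength (x : σ → A) : ℕ := ⨅ a, gradedLength x a

variable {x : σ → A}

theorem natCast_gradedLength (hx : Module.length A (A ⧸ Ideal.span (Set.range x)) ≠ ⊤)
    (a : σ →₀ ℕ) : (gradedLength x a : ℕ∞) = Module.length A (A ⧸ initialColon x a) :=
  ENat.natCast_toNat (ne_top_of_le_ne_top hx
    (length_quotient_antitone (span_range_le_initialColon x a)))

theorem gradedLength_antitone (hx : Module.length A (A ⧸ Ideal.span (Set.range x)) ≠ ⊤) :
    Antitone (gradedLength x) := fun a b hab => by
  rw [← Nat.cast_le (α := ℕ∞), natCast_gradedLength hx, natCast_gradedLength hx]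
  exact length_quotient_antitone (initialColon_mono x hab)

theorem stableLength_le (hx : Module.length A (A ⧸ Ideal.span (Set.range x)) ≠ ⊤) :
    stableLength x ≤ (Module.length A (A ⧸ Ideal.span (Set.range x))).toNat :=
  (ciInf_le' _ 0).trans
    (ENat.toNat_le_toNat (length_quotient_antitone (span_range_le_initialColon x 0)) hx)

variable [Fintype σ]

theorem isLowerSet_exponentSimplex (n : ℕ) :
    IsLowerSet (ofDegLex ⁻¹' (exponentSimplex σ n : Set (σ →₀ ℕ))) := fun _ _ hba ha =>
  mem_exponentSimplex.mpr
    ((Finsupp.DegLex.monotone_degree hba).trans_lt (mem_exponentSimplex.mp ha))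

theorem length_quotient_span_range_pow
    (hx : Module.length A (A ⧸ Ideal.span (Set.range x)) ≠ ⊤) (n : ℕ) :
    Module.length A (A ⧸ Ideal.span (Set.range x) ^ n) =
      (∑ a ∈ exponentSimplex σ n, gradedLength x a : ℕ) := by
  have compl_eq : (exponentSimplex σ n : Set (σ →₀ ℕ))ᶜ = {a | n ≤ a.degree} := by
    ext a
    simp
  rw [span_range_pow_eq_monomialSpan, ← compl_eq,
    length_quotient_monomialSpan_compl_eq x (isLowerSet_exponentSimplex n), Nat.cast_sum]
  exact Finset.sum_congr rfl fun a _ => (natCast_gradedLength hx a).symm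

theorem length_quotient_span_range_pow_apply_le
    (hx : Module.length A (A ⧸ Ideal.span (Set.range x)) ≠ ⊤) (n : ℕ) :
    Module.length A (A ⧸ Ideal.span (Set.range fun i => x i ^ n)) ≤
      (∑ a ∈ exponentBox σ n, gradedLength x a : ℕ) := by
  rw [Nat.cast_sum, Finset.sum_congr rfl fun a _ => natCast_gradedLength hx a]
  exact (length_quotient_antitone (monomialSpan_compl_exponentBox_le x n)).trans
    (length_quotient_monomialSpan_compl_le x _)

theorem tendsto_length_quotient_span_range_pow
    (hx : Module.length A (A ⧸ Ideal.span (Set.range x)) ≠ ⊤) :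
    Tendsto (fun n : ℕ => ((Fintype.card σ).factorial : ℝ) *
      ((Module.length A (A ⧸ Ideal.span (Set.range x) ^ n)).toNat : ℝ) /
      (n : ℝ) ^ Fintype.card σ) atTop (𝓝 (stableLength x)) := by
  simp only [length_quotient_span_range_pow hx, ENat.toNat_natCast]
  exact tendsto_sum_div_of_antitone (gradedLength_antitone hx) exponentSimplex_subset_exponentBox
    (tendsto_card_exponentSimplex σ)

theorem stableLength_mul_pow_le_length (hx : Module.length A (A ⧸ Ideal.span (Set.range x)) ≠ ⊤)
    {n : ℕ} (hn : 0 < n) :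
    stableLength x * n ^ Fintype.card σ ≤
      (Module.length A (A ⧸ Ideal.span (Set.range fun i => x i ^ n))).toNat := by
  have hy := ne_top_of_le_ne_top (ENat.natCast_ne_top _)
    (length_quotient_span_range_pow_apply_le hx n)
  refine le_trans ?_ (stableLength_le hy)
  have length_le (m : ℕ) : (Module.length A (A ⧸ Ideal.span (Set.range x) ^ (n * m))).toNat ≤
      (Module.length A (A ⧸ Ideal.span (Set.range fun i => x i ^ n) ^ m)).toNat :=
    ENat.toNat_le_toNat (length_quotient_antitone (span_range_pow_apply_pow_le x n m))
      (length_quotient_span_range_pow hy m ▸ ENat.natCast_ne_top _)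
  have subsequence_tendsto := ((tendsto_length_quotient_span_range_pow hx).comp
    (tendsto_id.const_mul_atTop' hn)).mul_const ((n : ℝ) ^ Fintype.card σ)
  rw [← Nat.cast_le (α := ℝ), Nat.cast_mul, Nat.cast_pow]
  refine le_of_tendsto_of_tendsto' subsequence_tendsto
    (tendsto_length_quotient_span_range_pow hy) fun m => ?_
  have pow_ne_zero : (n : ℝ) ^ Fintype.card σ ≠ 0 := by positivity
  simp only [Function.comp_apply, id_eq, Nat.cast_mul, mul_pow]
  rw [mul_comm ((n : ℝ) ^ _), ← div_div, div_mul_cancel₀ _ pow_ne_zero]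
  gcongr _ * ?_ / _
  exact Nat.cast_le.mpr (length_le m)

theorem tendsto_length_quotient_span_range_pow_apply
    (hx : Module.length A (A ⧸ Ideal.span (Set.range x)) ≠ ⊤) :
    Tendsto (fun n : ℕ =>
      ((Module.length A (A ⧸ Ideal.span (Set.range fun i => x i ^ n))).toNat : ℝ) /
      (n : ℝ) ^ Fintype.card σ) atTop (𝓝 (stableLength x)) := by
  have upper_tendsto := tendsto_sum_div_of_antitone (gradedLength_antitone hx)
    (T := exponentBox σ) (c := 1) (fun _ => subset_rfl)
    (by simpa only [one_mul] using tendsto_card_exponentBox σ)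
  simp only [one_mul] at upper_tendsto
  refine tendsto_of_tendsto_of_tendsto_of_le_of_le' tendsto_const_nhds upper_tendsto ?_
    (Eventually.of_forall fun n => ?_)
  · filter_upwards [eventually_gt_atTop 0] with n hn
    rw [le_div_iff₀ (by positivity), ← Nat.cast_pow, ← Nat.cast_mul, Nat.cast_le]
    exact stableLength_mul_pow_le_length hx hn
  · gcongr
    exact ENat.toNat_le_of_le_natCast (length_quotient_span_range_pow_apply_le hx n)

end StableLength

theorem bracketPow_span_range (p : ℕ) [Fact p.Prime] [CharP A p] (x : σ → A) (e : ℕ) :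
    (Ideal.span (Set.range x)).bracketPow (p ^ e) =
      Ideal.span (Set.range fun i => x i ^ p ^ e) := by
  change Ideal.map (iterateFrobenius A p e) (Ideal.span (Set.range x)) = _
  rw [Ideal.map_span, ← Set.range_comp]
  rfl

end Multiplicity

theorem hilbert_samuel_eq_hilbert_kunz_of_parameter_general {A : Type*} [CommRing A] (p : ℕ)
    [Fact p.Prime] [CharP A p] {σ : Type*} [Fintype σ] (x : σ → A)
    (hx : moduleLength A (A ⧸ Ideal.span (Set.range x)) ≠ ⊤) :
    ∃ L : ℝ,
      Tendsto
        (fun n : ℕ => ((Fintype.card σ).factorial : ℝ) *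
          ((moduleLength A (A ⧸ Ideal.span (Set.range x) ^ n)).toNat : ℝ) /
          (n : ℝ) ^ Fintype.card σ)
        atTop (𝓝 L) ∧
      Tendsto
        (fun e : ℕ =>
          ((moduleLength A (A ⧸ (Ideal.span (Set.range x)).bracketPow (p ^ e))).toNat : ℝ) /
          (p : ℝ) ^ (e * Fintype.card σ))
        atTop (𝓝 L) := by
  let := LinearOrder.lift' (Fintype.equivFin σ) (Fintype.equivFin σ).injective
  simp only [moduleLength_eq_length] at hx ⊢
  refine ⟨stableLength x, tendsto_length_quotient_span_range_pow hx, ?_⟩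
  have pow_tendsto : Tendsto (fun e : ℕ => p ^ e) atTop atTop :=
    tendsto_pow_atTop_atTop_of_one_lt (Fact.out : p.Prime).one_lt
  refine ((tendsto_length_quotient_span_range_pow_apply hx).comp pow_tendsto).congr fun e => ?_
  rw [bracketPow_span_range, Function.comp_apply, Nat.cast_pow, ← pow_mul]

/-- **Lech.** For an `𝔪`-primary ideal `I` of a `d`-dimensional Noetherian local ring of
characteristic `p` generated by `d` elements (a parameter ideal), the Hilbert–Samuel
multiplicity and the Hilbert–Kunz multiplicity of `I` coincide. -/
theorem hilbert_samuel_eq_hilbert_kunz_of_parameter (A : Type*) [CommRing A]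
    [IsLocalRing A] [IsNoetherianRing A] (p : ℕ) [Fact p.Prime] [CharP A p]
    (d : ℕ) (hd : ringKrullDim A = d)
    (I : Ideal A) (hI : I.radical = IsLocalRing.maximalIdeal A)
    (x : Fin d → A) (hgen : I = Ideal.span (Set.range x)) :
    ∃ L : ℝ,
      Filter.Tendsto
        (fun n : ℕ =>
          (d.factorial : ℝ) * ((moduleLength A (A ⧸ I ^ n)).toNat : ℝ) / (n : ℝ) ^ d)
        Filter.atTop (nhds L) ∧
      Filter.Tendsto
        (fun e : ℕ =>
          ((moduleLength A (A ⧸ I.bracketPow (p ^ e))).toNat : ℝ) / (p : ℝ) ^ (e * d))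
        Filter.atTop (nhds L) := by
  subst hgen
  have length_ne_top : moduleLength A (A ⧸ Ideal.span (Set.range x)) ≠ ⊤ := by
    rw [moduleLength_eq_length]
    exact length_quotient_ne_top_of_isMaximal_radical (hI ▸ maximalIdeal.isMaximal A)
  simpa only [Fintype.card_fin] using
    hilbert_samuel_eq_hilbert_kunz_of_parameter_general p x length_ne_top
end
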